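/- arXiv:1612.08237 — 2 statements merged into one kernel-verified Lean document; each statement's English description precedes it below -/
import Mathlib

section
/- Let Ω ⊆ ℝ^n be an open set and s ∈ (0,1). A measurable set E ⊆ ℝ^n (normalized in its Lebesgue class so that its topological boundary ∂E equals its measure-theoretic boundary) has locally finite s-perimeter in Ω (i.e. P_s(E,Ω') < ∞ for every open Ω' ⊂⊂ Ω) if and only if there exist a sequence of open sets E_h ⊆ ℝ^n with smooth boundary and a sequence ε_h → 0⁺ such that: (i) E_h →loc E and sup_h P_s(E_h,Ω') < ∞ for every open Ω' ⊂⊂ Ω; (ii) lim_{h→∞} P_s(E_h,Ω') = P_s(E,Ω') for every open Ω' ⊂⊂ Ω; (iii) ∂E_h ⊆ N_{ε_h}(∂E). Moreover, if Ω = ℝ^n, |E| < ∞ and P_s(E) < ∞, then the sets E_h can be chosen bounded and such that |E_h Δ E| → 0 and P_s(E_h) → P_s(E). -/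
open MeasureTheory Set Filter Topology Metric Bornology
open scoped ENNReal NNReal symmDiff

noncomputable def Ls (n : ℕ) (s : ℝ) (A B : Set (EuclideanSpace ℝ (Fin n))) : ℝ≥0∞ :=
  ∫⁻ x in A, ∫⁻ y in B, ENNReal.ofReal (dist x y ^ (-((n : ℝ) + s)))

noncomputable def Ps (n : ℕ) (s : ℝ) (E Ω : Set (EuclideanSpace ℝ (Fin n))) : ℝ≥0∞ :=
  Ls n s (E ∩ Ω) (Eᶜ ∩ Ω) + Ls n s (E ∩ Ω) (Eᶜ \ Ω) + Ls n s (E \ Ω) (Eᶜ ∩ Ω)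

def LocConv (n : ℕ) (A : ℕ → Set (EuclideanSpace ℝ (Fin n)))
    (B : Set (EuclideanSpace ℝ (Fin n))) : Prop :=
  ∀ K : Set (EuclideanSpace ℝ (Fin n)), IsBounded K →
    Tendsto (fun h => volume ((A h ∆ B) ∩ K)) atTop (𝓝 0)

def HasSmoothBoundary {n : ℕ} (E : Set (EuclideanSpace ℝ (Fin n))) : Prop :=
  ∃ (f : EuclideanSpace ℝ (Fin n) → ℝ) (t : ℝ), ContDiff ℝ (⊤ : ℕ∞) f ∧
    (∀ x, f x = t → fderiv ℝ f x ≠ 0) ∧ E = {x | t < f x}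

def mtBoundary {n : ℕ} (E : Set (EuclideanSpace ℝ (Fin n))) : Set (EuclideanSpace ℝ (Fin n)) :=
  {x | ∀ r > 0, 0 < volume (E ∩ Metric.ball x r) ∧
    volume (E ∩ Metric.ball x r) < volume (Metric.ball x r)}

/-! For `0 ≤ g ≤ 1`, a coarea inequality bounds the average over `t ∈ (0, 1)` of the distance
between `{g > t}` and `E`, measured through points and through separated pairs, by the
`W^{s,1}`-type norm of `g - 1_E`. Hence it is enough to approximate `1_E` in that norm by smooth
functions and to pick good levels.

The approximation is by mollification: `K(x - y) (v x - v y)` is translated along the diagonal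
when `v` is translated, so the continuity of translations in `L¹` of the product applies. A
mollification at scale `ε` can have `x` on the boundary of one of its intermediate level sets only
if both `E` and its complement have positive measure in `ball x ε`, and a ball is connected, so it
then meets the measure-theoretic boundary of `E`.

Almost every level is made regular with only the equidimensional case of Sard's theorem. Let `θ`
be a diffeomorphism of the space onto its unit ball. In the coordinates `y = θ x` the critical
points of `f + ⟪a, θ⟫` solve `∇(f ∘ θ⁻¹) y = -a`, and they are isolated as soon as `-a` is a
regular value of this gradient. For almost every small `a` the perturbed function thus has
countably many critical values.

When `E` has finite measure and finite perimeter, `1_E` is first multiplied by a Lipschitz cutoff,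
which makes the approximating sets bounded.
-/

section CriticalPoints

theorem ae_countable_inter_preimage_singleton {V : Type*} [NormedAddCommGroup V] [NormedSpace ℝ V]
    [FiniteDimensional ℝ V] [MeasurableSpace V] [BorelSpace V] (μ : Measure V) [μ.IsAddHaarMeasure]
    {U : Set V} (hU : IsOpen U) {G : V → V} (hG : DifferentiableOn ℝ G U) :
    ∀ᵐ b ∂μ, (U ∩ G ⁻¹' {b}).Countable := by
  have hdiff : ∀ y ∈ U, HasFDerivAt G (fderiv ℝ G y) y := fun y hy =>
    (hG.differentiableAt (hU.mem_nhds hy)).hasFDerivAt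
  have hnull : μ (G '' {y ∈ U | (fderiv ℝ G y).det = 0}) = 0 :=
    addHaar_image_eq_zero_of_det_fderivWithin_eq_zero μ
      (fun y hy => (hdiff y hy.1).hasFDerivWithinAt) fun y hy => hy.2
  filter_upwards [measure_eq_zero_iff_ae_notMem.1 hnull] with b hb
  refine (HereditarilyLindelofSpace.isLindelof _).countable_of_isDiscrete ?_
  rw [isDiscrete_iff_nhdsNE]
  rintro y ⟨hyU, hyb⟩
  have hdet : (fderiv ℝ G y).det ≠ 0 := fun h => hb ⟨y, ⟨hyU, h⟩, hyb⟩
  have hne : ∀ᶠ z in 𝓝[≠] y, G z ≠ b := (hdiff y hyU).eventually_ne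
    ⟨_, ((fderiv ℝ G y).toContinuousLinearEquivOfDetNeZero hdet).antilipschitz⟩
  rw [inf_principal_eq_bot]
  exact hne.mono fun z hz hzb => hz hzb.2

variable {H : Type*} [NormedAddCommGroup H] [InnerProductSpace ℝ H] [FiniteDimensional ℝ H]
  [MeasurableSpace H] [BorelSpace H] (μ : Measure H) [μ.IsAddHaarMeasure]

theorem ae_countable_criticalPoints_add_inner {U : Set H} (hU : IsOpen U) {f : H → ℝ}
    (hf : ContDiffOn ℝ 2 f U) :
    ∀ᵐ a ∂μ, {y ∈ U | fderiv ℝ (fun y => f y + inner ℝ a y) y = 0}.Countable := by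
  have hf_at : ∀ y ∈ U, ContDiffAt ℝ 2 f y := fun y hy => hf.contDiffAt (hU.mem_nhds hy)
  have hgrad : DifferentiableOn ℝ (fun y => -gradient f y) U := fun y hy =>
    (((InnerProductSpace.toDual ℝ H).symm.toContinuousLinearEquiv.differentiableAt.comp y
      (((hf_at y hy).fderiv_right (m := 1) (by norm_num)).differentiableAt
        one_ne_zero)).neg).differentiableWithinAt
  filter_upwards [ae_countable_inter_preimage_singleton μ hU hgrad] with a ha
  refine ha.mono ?_
  rintro y ⟨hy, hcrit⟩
  refine ⟨hy, ?_⟩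
  have hfd : HasFDerivAt f (fderiv ℝ f y) y :=
    ((hf_at y hy).differentiableAt two_ne_zero).hasFDerivAt
  have hsum : HasFDerivAt (fun y => f y + inner ℝ a y) (fderiv ℝ f y + innerSL ℝ a) y :=
    hfd.add (innerSL ℝ a).hasFDerivAt
  have hfderiv : fderiv ℝ f y = InnerProductSpace.toDual ℝ H (-a) := by
    rw [map_neg]
    exact eq_neg_of_add_eq_zero_left (hsum.fderiv.symm.trans hcrit)
  simp [gradient, hfderiv]

theorem ae_countable_criticalPoints_add_inner_comp {e : OpenPartialHomeomorph H H}
    (hsource : e.source = univ) (he : ContDiff ℝ 2 e) (he_symm : ContDiffOn ℝ 2 e.symm e.target)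
    {f : H → ℝ} (hf : ContDiff ℝ 2 f) :
    ∀ᵐ a ∂μ, {x | fderiv ℝ (fun x => f x + inner ℝ a (e x)) x = 0}.Countable := by
  have hinv : ∀ x, e.symm (e x) = x := fun x => e.left_inv (hsource ▸ mem_univ x)
  have hmem : ∀ x, e x ∈ e.target := fun x => e.map_source (hsource ▸ mem_univ x)
  filter_upwards [ae_countable_criticalPoints_add_inner μ e.open_target
    (hf.comp_contDiffOn he_symm)] with a ha
  refine MapsTo.countable_of_injOn (f := e) ?_ (Function.LeftInverse.injective hinv).injOn ha
  intro x hx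
  refine ⟨hmem x, ?_⟩
  have hsymm : DifferentiableAt ℝ e.symm (e x) :=
    (he_symm.contDiffAt (e.open_target.mem_nhds (hmem x))).differentiableAt two_ne_zero
  have hpull : (fun y => (f ∘ e.symm) y + inner ℝ a y) =ᶠ[𝓝 (e x)]
      (fun x => f x + inner ℝ a (e x)) ∘ e.symm := by
    filter_upwards [e.open_target.mem_nhds (hmem x)] with y hy
    simp only [Function.comp_apply, e.right_inv hy]
  have hdiff : Differentiable ℝ fun x => f x + inner ℝ a (e x) :=
    (hf.differentiable two_ne_zero).add
      ((differentiable_const a).inner ℝ (he.differentiable two_ne_zero))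
  rw [hpull.fderiv_eq, fderiv_comp _ (hdiff _) hsymm, hinv, hx, ContinuousLinearMap.zero_comp]

end CriticalPoints

section SobolevNorm

variable {X F F' : Type*} [MeasurableSpace X] [NormedAddCommGroup F] [NormedAddCommGroup F']

/-- The `W^{s,1}`-type norm `∫ |u x - u y| dκ(x, y) + ∫ |u| dμ`, with the singular kernel and the
domain of integration absorbed into the measure `κ` on pairs. -/
noncomputable def sobolevNorm (κ : Measure (X × X)) (μ : Measure X) (u : X → F) : ℝ≥0∞ :=
  ∫⁻ p, ‖u p.1 - u p.2‖ₑ ∂κ + ∫⁻ x, ‖u x‖ₑ ∂μ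

variable {κ : Measure (X × X)} {μ : Measure X}

theorem sobolevNorm_add_le [MeasurableSpace F] [BorelSpace F] [SecondCountableTopology F]
    {u : X → F} (hu : Measurable u) (w : X → F) :
    sobolevNorm κ μ (u + w) ≤ sobolevNorm κ μ u + sobolevNorm κ μ w := by
  have hpair : Measurable fun p : X × X => ‖u p.1 - u p.2‖ₑ :=
    ((hu.comp measurable_fst).sub (hu.comp measurable_snd)).enorm
  unfold sobolevNorm
  rw [add_add_add_comm, ← lintegral_add_left hpair, ← lintegral_add_left hu.enorm]
  gcongr with p x
  · simpa only [Pi.add_apply, add_sub_add_comm] using enorm_add_le _ _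
  · exact enorm_add_le _ _

theorem sobolevNorm_clm_comp_le [NormedSpace ℝ F] [NormedSpace ℝ F'] (L : F →L[ℝ] F')
    (u : X → F) : sobolevNorm κ μ (L ∘ u) ≤ ‖L‖ₑ * sobolevNorm κ μ u := by
  unfold sobolevNorm
  rw [mul_add, ← lintegral_const_mul' _ _ enorm_ne_top, ← lintegral_const_mul' _ _ enorm_ne_top]
  gcongr with p x
  · simpa only [Function.comp_apply, map_sub] using L.le_opENorm (u p.1 - u p.2)
  · exact L.le_opENorm (u x)

theorem sobolevNorm_integral_le [NormedSpace ℝ F] [SFinite κ] [SFinite μ]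
    {Z : Type*} [MeasurableSpace Z] (ρ : Measure Z) [SFinite ρ] {w : Z → X → F}
    (hw : StronglyMeasurable w.uncurry) (hint : ∀ x, Integrable (fun z => w z x) ρ) :
    sobolevNorm κ μ (fun x => ∫ z, w z x ∂ρ) ≤ ∫⁻ z, sobolevNorm κ μ (w z) ∂ρ := by
  have hpair : Measurable fun q : (X × X) × Z => ‖w q.2 q.1.1 - w q.2 q.1.2‖ₑ :=
    ((hw.comp_measurable (g := fun q : (X × X) × Z => (q.2, q.1.1)) (by fun_prop)).sub
      (hw.comp_measurable (g := fun q : (X × X) × Z => (q.2, q.1.2)) (by fun_prop))).enorm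
  have hpoint : Measurable fun q : X × Z => ‖w q.2 q.1‖ₑ :=
    (hw.comp_measurable measurable_swap).enorm
  calc sobolevNorm κ μ (fun x => ∫ z, w z x ∂ρ)
      ≤ ∫⁻ p, ∫⁻ z, ‖w z p.1 - w z p.2‖ₑ ∂ρ ∂κ + ∫⁻ x, ∫⁻ z, ‖w z x‖ₑ ∂ρ ∂μ := by
        unfold sobolevNorm
        gcongr with p x
        · rw [← integral_sub (hint p.1) (hint p.2)]
          exact enorm_integral_le_lintegral_enorm _
        · exact enorm_integral_le_lintegral_enorm _
    _ = ∫⁻ z, ∫⁻ p, ‖w z p.1 - w z p.2‖ₑ ∂κ ∂ρ + ∫⁻ z, ∫⁻ x, ‖w z x‖ₑ ∂μ ∂ρ := by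
        congr 1
        · exact lintegral_lintegral_swap hpair.aemeasurable
        · exact lintegral_lintegral_swap hpoint.aemeasurable
    _ = ∫⁻ z, sobolevNorm κ μ (w z) ∂ρ :=
        (lintegral_add_left (hpair.comp measurable_swap).lintegral_prod_right' _).symm

end SobolevNorm

section Superlevel

variable {X : Type*}

/-- The pairs `(x, y)` with `x ∈ F` and `y ∉ F`, which are the pairs whose interactions make up the
nonlocal perimeter of `F`. -/
def cutPairs (F : Set X) : Set (X × X) := F ×ˢ Fᶜ

theorem volume_level_mem_cutPairs_symmDiff_le {g : X → ℝ} (h0 : ∀ x, 0 ≤ g x) (h1 : ∀ x, g x ≤ 1)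
    (E : Set X) (p : X × X) :
    volume.restrict (Ioo 0 1) {t | p ∈ cutPairs {x | t < g x} ∆ cutPairs E} ≤
      ‖(g - E.indicator 1 : X → ℝ) p.1 - (g - E.indicator 1 : X → ℝ) p.2‖ₑ := by
  rw [Measure.restrict_apply' measurableSet_Ioo, ← ofReal_norm, Real.norm_eq_abs]
  by_cases hp : p ∈ cutPairs E
  · have hsub : {t | p ∈ cutPairs {x | t < g x} ∆ cutPairs E} ∩ Ioo 0 1 ⊆
        Ico (g p.1) 1 ∪ Ioo 0 (g p.2) := by
      rintro t ⟨⟨-, hpE⟩ | ⟨-, hpg⟩, ht0, ht1⟩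
      · exact absurd hp hpE
      · by_cases h : t < g p.1
        · exact .inr ⟨ht0, by_contra fun h' => hpg ⟨h, h'⟩⟩
        · exact .inl ⟨not_lt.1 h, ht1⟩
    refine (measure_mono hsub).trans ((measure_union_le _ _).trans ?_)
    rw [Real.volume_Ico, Real.volume_Ioo, ← ENNReal.ofReal_add (sub_nonneg.2 (h1 _))
      (sub_nonneg.2 (h0 _)), abs_sub_comm]
    refine ENNReal.ofReal_le_ofReal (le_trans (le_of_eq ?_) (le_abs_self _))
    simp only [Pi.sub_apply, indicator_of_mem hp.1, indicator_of_notMem hp.2, Pi.one_apply]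
    ring
  · have hsub : {t | p ∈ cutPairs {x | t < g x} ∆ cutPairs E} ∩ Ioo 0 1 ⊆ Ico (g p.2) (g p.1) := by
      rintro t ⟨⟨⟨hp1, hp2⟩, -⟩ | ⟨hpE, -⟩, -⟩
      · exact ⟨not_lt.1 hp2, hp1⟩
      · exact absurd hpE hp
    refine (measure_mono hsub).trans ?_
    rw [Real.volume_Ico]
    refine ENNReal.ofReal_le_ofReal (le_trans ?_ (le_abs_self _))
    have hind : E.indicator (1 : X → ℝ) p.1 ≤ E.indicator 1 p.2 := by
      by_cases h : p.1 ∈ E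
      · rw [indicator_of_mem h, indicator_of_mem (by_contra fun h' => hp ⟨h, h'⟩), Pi.one_apply,
          Pi.one_apply]
      · rw [indicator_of_notMem h]
        exact indicator_nonneg (fun _ _ => zero_le_one) _
    simp only [Pi.sub_apply]
    linarith

theorem volume_level_mem_symmDiff_le {g : X → ℝ} (h0 : ∀ x, 0 ≤ g x) (h1 : ∀ x, g x ≤ 1)
    (E : Set X) (x : X) :
    volume.restrict (Ioo 0 1) {t | x ∈ {x | t < g x} ∆ E} ≤
      ‖(g - E.indicator 1 : X → ℝ) x‖ₑ := by
  rw [Measure.restrict_apply' measurableSet_Ioo, ← ofReal_norm, Real.norm_eq_abs]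
  by_cases hx : x ∈ E
  · have hsub : {t | x ∈ {x | t < g x} ∆ E} ∩ Ioo 0 1 ⊆ Ico (g x) 1 := by
      rintro t ⟨⟨-, hxE⟩ | ⟨-, hxg⟩, -, ht1⟩
      · exact absurd hx hxE
      · exact ⟨not_lt.1 hxg, ht1⟩
    refine (measure_mono hsub).trans ?_
    rw [Real.volume_Ico, Pi.sub_apply, indicator_of_mem hx, Pi.one_apply, abs_sub_comm,
      abs_of_nonneg (sub_nonneg.2 (h1 x))]
  · have hsub : {t | x ∈ {x | t < g x} ∆ E} ∩ Ioo 0 1 ⊆ Ioo 0 (g x) := by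
      rintro t ⟨⟨hxg, -⟩ | ⟨hxE, -⟩, ht0, -⟩
      · exact ⟨ht0, hxg⟩
      · exact absurd hxE hx
    refine (measure_mono hsub).trans ?_
    rw [Real.volume_Ioo, Pi.sub_apply, indicator_of_notMem hx, sub_zero,
      abs_of_nonneg (h0 x)]

variable [MeasurableSpace X]

theorem measurableSet_cutPairs {F : Set X} (hF : MeasurableSet F) : MeasurableSet (cutPairs F) :=
  hF.prod hF.compl

/-- The distance between two sets measured through their separated pairs by `κ` and through their
points by `μ`. It controls the difference of the perimeters, and is the counterpart of
`sobolevNorm` for sets. -/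
noncomputable def cutDist (κ : Measure (X × X)) (μ : Measure X) (F E : Set X) : ℝ≥0∞ :=
  κ (cutPairs F ∆ cutPairs E) + μ (F ∆ E)

variable {κ : Measure (X × X)} {μ : Measure X} [SFinite κ] [SFinite μ] {g : X → ℝ} {E : Set X}

theorem measurableSet_level_mem_cutPairs_symmDiff (hg : Measurable g) (hE : MeasurableSet E) :
    MeasurableSet {q : ℝ × X × X | q.2 ∈ cutPairs {x | q.1 < g x} ∆ cutPairs E} := by
  have hlevel : MeasurableSet {q : ℝ × X × X | q.2 ∈ cutPairs {x | q.1 < g x}} :=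
    (measurableSet_lt (by fun_prop) (by fun_prop)).inter
      (measurableSet_lt (g := fun q : ℝ × X × X => g q.2.2) (by fun_prop) (by fun_prop)).compl
  exact hlevel.symmDiff (measurable_snd (measurableSet_cutPairs hE))

theorem measurableSet_level_mem_symmDiff (hg : Measurable g) (hE : MeasurableSet E) :
    MeasurableSet {q : ℝ × X | q.2 ∈ {x | q.1 < g x} ∆ E} :=
  (measurableSet_lt (by fun_prop) (by fun_prop)).symmDiff (measurable_snd hE)

theorem measurable_cutDist_superlevel (hg : Measurable g) (hE : MeasurableSet E) :
    Measurable fun t => cutDist κ μ {x | t < g x} E :=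
  (measurable_measure_prodMk_left (measurableSet_level_mem_cutPairs_symmDiff hg hE)).add
    (measurable_measure_prodMk_left (measurableSet_level_mem_symmDiff hg hE))

theorem lintegral_cutDist_superlevel_le (hg : Measurable g) (h0 : ∀ x, 0 ≤ g x)
    (h1 : ∀ x, g x ≤ 1) (hE : MeasurableSet E) :
    ∫⁻ t in Ioo 0 1, cutDist κ μ {x | t < g x} E ≤ sobolevNorm κ μ (g - E.indicator 1) := by
  have hpair := measurableSet_level_mem_cutPairs_symmDiff hg hE
  have hpoint := measurableSet_level_mem_symmDiff hg hE
  calc ∫⁻ t in Ioo 0 1, cutDist κ μ {x | t < g x} E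
      = (∫⁻ t in Ioo 0 1, κ {p | p ∈ cutPairs {x | t < g x} ∆ cutPairs E}) +
        ∫⁻ t in Ioo 0 1, μ {x | x ∈ {x | t < g x} ∆ E} :=
        lintegral_add_left (measurable_measure_prodMk_left hpair) _
    _ = ∫⁻ p, volume.restrict (Ioo 0 1) {t | p ∈ cutPairs {x | t < g x} ∆ cutPairs E} ∂κ +
        ∫⁻ x, volume.restrict (Ioo 0 1) {t | x ∈ {x | t < g x} ∆ E} ∂μ :=
        congr_arg₂ (· + ·) ((Measure.prod_apply hpair).symm.trans (Measure.prod_apply_symm hpair))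
          ((Measure.prod_apply hpoint).symm.trans (Measure.prod_apply_symm hpoint))
    _ ≤ sobolevNorm κ μ (g - E.indicator 1) :=
        add_le_add (lintegral_mono fun p => volume_level_mem_cutPairs_symmDiff_le h0 h1 E p)
          (lintegral_mono fun x => volume_level_mem_symmDiff_le h0 h1 E x)

theorem exists_superlevel_cutDist_lt (hg : Measurable g) (h0 : ∀ x, 0 ≤ g x)
    (h1 : ∀ x, g x ≤ 1) (hE : MeasurableSet E) {a b : ℝ} (ha : 0 ≤ a) (hb : b ≤ 1)
    {τ : ℝ≥0∞} (hτ : sobolevNorm κ μ (g - E.indicator 1) < ENNReal.ofReal (b - a) * τ)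
    {P : ℝ → Prop} (hP : ∀ᵐ t ∂volume.restrict (Ioo 0 1), P t) :
    ∃ t ∈ Ioo a b, P t ∧ cutDist κ μ {x | t < g x} E < τ := by
  have hsub : Ioo a b ⊆ Ioo 0 1 := Ioo_subset_Ioo ha hb
  have hP' : ∀ᵐ t ∂volume.restrict (Ioo a b), t ∈ Ioo a b ∧ P t :=
    (ae_restrict_mem measurableSet_Ioo).and (ae_restrict_of_ae_restrict_of_subset hsub hP)
  by_contra! hcon
  have hle : ∫⁻ _ in Ioo a b, τ ≤ ∫⁻ t in Ioo a b, cutDist κ μ {x | t < g x} E :=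
    lintegral_mono_ae (hP'.mono fun t ht => hcon t ht.1 ht.2)
  rw [lintegral_const, Measure.restrict_apply_univ, Real.volume_Ioo, mul_comm] at hle
  exact hτ.not_ge (hle.trans ((lintegral_mono_set hsub).trans
    (lintegral_cutDist_superlevel_le hg h0 h1 hE)))

end Superlevel

section Kernel

/-- The pairs with at least one point in `U`, which are those that contribute to the perimeter
in `U`. -/
def pairsMeeting {X : Type*} (U : Set X) : Set (X × X) := {p | p.1 ∈ U ∨ p.2 ∈ U}

theorem pairsMeeting_mono {X : Type*} {U W : Set X} (h : U ⊆ W) :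
    pairsMeeting U ⊆ pairsMeeting W :=
  fun _ => Or.imp (h ·) (h ·)

theorem pairsMeeting_univ {X : Type*} : pairsMeeting (univ : Set X) = univ :=
  eq_univ_of_forall fun _ => .inl trivial

theorem cutPairs_subset_pairsMeeting {X : Type*} {E U : Set X} (h : E ⊆ U) :
    cutPairs E ⊆ pairsMeeting U :=
  fun _ hp => .inl (h hp.1)

theorem measurableSet_pairsMeeting {X : Type*} [MeasurableSpace X] {U : Set X}
    (hU : MeasurableSet U) : MeasurableSet (pairsMeeting U) :=
  (measurable_fst hU).union (measurable_snd hU)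

variable {V F : Type*} [NormedAddCommGroup V] [NormedSpace ℝ V] [FiniteDimensional ℝ V]
  [NormedAddCommGroup F] [NormedSpace ℝ F]

theorem exists_norm_sub_le_mul_min_one_dist {w : V → F} (hw : ContDiff ℝ 1 w)
    {M : ℝ} (hM : ∀ x, ‖w x‖ ≤ M) {C : Set V} (hC : IsBounded C) :
    ∃ L : ℝ≥0, ∀ p ∈ pairsMeeting C, ‖w p.1 - w p.2‖ ≤ L * min 1 (dist p.1 p.2) := by
  obtain ⟨R, hR⟩ := hC.subset_closedBall 0
  obtain ⟨L, hL⟩ := (hw.contDiffOn (s := closedBall (0 : V) (R + 1))).exists_lipschitzOnWith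
    one_ne_zero (convex_closedBall _ _) (isCompact_closedBall _ _)
  refine ⟨max L (2 * M).toNNReal, fun p hp => ?_⟩
  rw [NNReal.coe_max]
  rcases le_total (dist p.1 p.2) 1 with hdist | hdist
  · have hmem : p.1 ∈ closedBall 0 (R + 1) ∧ p.2 ∈ closedBall 0 (R + 1) := by
      simp only [mem_closedBall]
      have htri := dist_triangle p.1 p.2 0
      have htri' := dist_triangle_left p.2 0 p.1
      rcases hp with hp | hp <;> have := mem_closedBall.1 (hR hp) <;> constructor <;> linarith
    rw [min_eq_right hdist, ← dist_eq_norm]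
    exact (hL.dist_le_mul _ hmem.1 _ hmem.2).trans (by gcongr; exact le_max_left _ _)
  · rw [min_eq_left hdist, mul_one]
    calc ‖w p.1 - w p.2‖ ≤ ‖w p.1‖ + ‖w p.2‖ := norm_sub_le _ _
      _ ≤ 2 * M := by linarith [hM p.1, hM p.2]
      _ ≤ max L (2 * M).toNNReal := (Real.le_coe_toNNReal _).trans (le_max_right _ _)

variable [MeasureSpace V] [BorelSpace V]

/-- The kernels `K` whose nonlocal perimeter is finite on bounded smooth sets: even, and with
the integrability of `min 1 ‖z‖ * K z` that pairs of Lipschitz differences require. -/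
structure IsPerimeterKernel (K : V → ℝ≥0) : Prop where
  measurable : Measurable K
  even : ∀ z, K (-z) = K z
  lintegral_lt_top : ∫⁻ z, ENNReal.ofReal (min 1 ‖z‖) * K z < ⊤

/-- The interaction `∫_A ∫_B K(x - y) dy dx` of two sets. -/
noncomputable def kernelInteraction (K : V → ℝ≥0) (A B : Set V) : ℝ≥0∞ :=
  ∫⁻ x in A, ∫⁻ y in B, K (x - y)

/-- The nonlocal perimeter of `E` in `Ω` with kernel `K`; the kernel `‖z‖ ^ (-(n + s))` gives the
`s`-fractional perimeter. -/
noncomputable def kernelPerimeter (K : V → ℝ≥0) (E Ω : Set V) : ℝ≥0∞ :=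
  kernelInteraction K (E ∩ Ω) (Eᶜ ∩ Ω) + kernelInteraction K (E ∩ Ω) (Eᶜ \ Ω) +
    kernelInteraction K (E \ Ω) (Eᶜ ∩ Ω)

/-- The measure `K(x - y) dx dy` on pairs. -/
noncomputable def kernelMeasure (K : V → ℝ≥0) : Measure (V × V) :=
  (volume : Measure (V × V)).withDensity fun p => K (p.1 - p.2)

variable {K : V → ℝ≥0}

theorem measurable_kernel_sub (hK : Measurable K) :
    Measurable fun p : V × V => K (p.1 - p.2) :=
  hK.comp (measurable_fst.sub measurable_snd)

variable [(volume : Measure V).IsAddHaarMeasure]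

instance : SFinite (kernelMeasure K) := by
  unfold kernelMeasure
  infer_instance

theorem kernelInteraction_eq_kernelMeasure (hK : Measurable K) {A B : Set V}
    (hA : MeasurableSet A) (hB : MeasurableSet B) :
    kernelInteraction K A B = kernelMeasure K (A ×ˢ B) := by
  rw [kernelMeasure, withDensity_apply _ (hA.prod hB), Measure.volume_eq_prod,
    ← Measure.prod_restrict,
    lintegral_prod _ (measurable_kernel_sub hK).coe_nnreal_ennreal.aemeasurable, kernelInteraction]

theorem kernelPerimeter_eq_kernelMeasure (hK : Measurable K) {E U : Set V}
    (hE : MeasurableSet E) (hU : MeasurableSet U) :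
    kernelPerimeter K E U = kernelMeasure K (cutPairs E ∩ pairsMeeting U) := by
  have hdisj : Disjoint ((E ∩ U) ×ˢ (Eᶜ ∩ U)) ((E ∩ U) ×ˢ (Eᶜ \ U)) :=
    disjoint_sdiff_inter.symm.set_prod_right _ _
  have hdisj' : Disjoint ((E ∩ U) ×ˢ (Eᶜ ∩ U) ∪ (E ∩ U) ×ˢ (Eᶜ \ U)) ((E \ U) ×ˢ (Eᶜ ∩ U)) :=
    (disjoint_sdiff_inter.symm.set_prod_left _ _).union_left
      (disjoint_sdiff_inter.symm.set_prod_left _ _)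
  rw [kernelPerimeter, kernelInteraction_eq_kernelMeasure hK (hE.inter hU) (hE.compl.inter hU),
    kernelInteraction_eq_kernelMeasure hK (hE.inter hU) (hE.compl.diff hU),
    kernelInteraction_eq_kernelMeasure hK (hE.diff hU) (hE.compl.inter hU),
    ← measure_union hdisj ((hE.inter hU).prod (hE.compl.diff hU)),
    ← measure_union hdisj' ((hE.diff hU).prod (hE.compl.inter hU))]
  congr 1
  ext p
  simp only [pairsMeeting, cutPairs, mem_union, mem_prod, mem_inter_iff, Set.mem_sdiff,
    mem_compl_iff, mem_ofPred_eq]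
  tauto

theorem kernelPerimeter_mono (hK : Measurable K) {E U W : Set V} (hE : MeasurableSet E)
    (hU : MeasurableSet U) (hW : MeasurableSet W) (h : U ⊆ W) :
    kernelPerimeter K E U ≤ kernelPerimeter K E W := by
  rw [kernelPerimeter_eq_kernelMeasure hK hE hU, kernelPerimeter_eq_kernelMeasure hK hE hW]
  exact measure_mono (inter_subset_inter_right _ (pairsMeeting_mono h))

theorem kernelPerimeter_eq_kernelPerimeter_univ (hK : Measurable K) {E U : Set V}
    (hE : MeasurableSet E) (hU : MeasurableSet U) (h : E ⊆ U) :
    kernelPerimeter K E U = kernelPerimeter K E univ := by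
  rw [kernelPerimeter_eq_kernelMeasure hK hE hU,
    kernelPerimeter_eq_kernelMeasure hK hE MeasurableSet.univ, pairsMeeting_univ, inter_univ,
    inter_eq_left.2 (cutPairs_subset_pairsMeeting h)]

theorem measurePreserving_swap_kernelMeasure (hK : IsPerimeterKernel K) :
    MeasurePreserving Prod.swap (kernelMeasure K) (kernelMeasure K) := by
  refine ⟨measurable_swap, Measure.ext fun S hS => ?_⟩
  have hswap : MeasurePreserving (Prod.swap : V × V → V × V) volume volume :=
    Measure.measurePreserving_swap
  rw [Measure.map_apply measurable_swap hS, kernelMeasure, withDensity_apply _ hS,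
    withDensity_apply _ (measurable_swap hS),
    ← hswap.setLIntegral_comp_preimage hS (measurable_kernel_sub hK.measurable).coe_nnreal_ennreal]
  refine lintegral_congr fun p => ?_
  rw [Prod.fst_swap, Prod.snd_swap, ← hK.even, neg_sub]

theorem lintegral_pairsMeeting_le_two_mul (hK : IsPerimeterKernel K) {U : Set V}
    (hU : MeasurableSet U) {h : V × V → ℝ≥0∞} (hh : Measurable h) (hsymm : ∀ p, h p.swap = h p) :
    ∫⁻ p in pairsMeeting U, h p ∂kernelMeasure K ≤ 2 * ∫⁻ p in U ×ˢ univ, h p ∂kernelMeasure K := by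
  have hcover : pairsMeeting U = U ×ˢ univ ∪ Prod.swap ⁻¹' (U ×ˢ univ) := by
    ext p
    simp only [pairsMeeting, mem_ofPred_eq, mem_union, mem_prod, mem_preimage, Prod.fst_swap,
      mem_univ, and_true]
  have hswap := (measurePreserving_swap_kernelMeasure hK).setLIntegral_comp_preimage
    (hU.prod MeasurableSet.univ) hh
  simp only [hsymm] at hswap
  rw [hcover, two_mul]
  exact (lintegral_union_le _ _ _).trans_eq (by rw [hswap])

theorem lintegral_min_one_dist_lt_top (hK : IsPerimeterKernel K) {A : Set V}
    (hA : MeasurableSet A) (hfin : volume A < ⊤) :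
    ∫⁻ p in pairsMeeting A, ENNReal.ofReal (min 1 (dist p.1 p.2)) ∂kernelMeasure K < ⊤ := by
  have hmin : Measurable fun p : V × V => ENNReal.ofReal (min 1 (dist p.1 p.2)) := by fun_prop
  have hinner : ∀ x : V, ∫⁻ y, K (x - y) * ENNReal.ofReal (min 1 (dist x y)) =
      ∫⁻ z, ENNReal.ofReal (min 1 ‖z‖) * K z := fun x => by
    rw [← lintegral_sub_left_eq_self _ x]
    simp only [dist_eq_norm, sub_sub_cancel, mul_comm]
  have hprod : ∫⁻ p in A ×ˢ univ, ENNReal.ofReal (min 1 (dist p.1 p.2)) ∂kernelMeasure K =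
      (∫⁻ z, ENNReal.ofReal (min 1 ‖z‖) * K z) * volume A := by
    rw [kernelMeasure, setLIntegral_withDensity_eq_setLIntegral_mul _
      (measurable_kernel_sub hK.measurable).coe_nnreal_ennreal hmin (hA.prod MeasurableSet.univ),
      Measure.volume_eq_prod, ← Measure.prod_restrict, Measure.restrict_univ, lintegral_prod _
      ((measurable_kernel_sub hK.measurable).coe_nnreal_ennreal.mul hmin).aemeasurable]
    simp only [Pi.mul_apply, hinner, lintegral_const, Measure.restrict_apply_univ]
  refine (lintegral_pairsMeeting_le_two_mul hK hA hmin fun p => ?_).trans_lt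
    (ENNReal.mul_lt_top ENNReal.ofNat_lt_top ?_)
  · rw [Prod.fst_swap, Prod.snd_swap, dist_comm]
  · exact hprod ▸ ENNReal.mul_lt_top hK.lintegral_lt_top hfin

theorem sobolevNorm_restrict_lt_top (hK : IsPerimeterKernel K) {w : V → F}
    (hw : ContDiff ℝ 1 w) {M : ℝ} (hM : ∀ x, ‖w x‖ ≤ M) {C B : Set V} (hC : IsBounded C)
    (hCm : MeasurableSet C) (hB : volume B < ⊤) :
    sobolevNorm ((kernelMeasure K).restrict (pairsMeeting C)) (volume.restrict B) w < ⊤ := by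
  obtain ⟨L, hL⟩ := exists_norm_sub_le_mul_min_one_dist hw hM hC
  refine ENNReal.add_lt_top.2 ⟨?_, ?_⟩
  · calc ∫⁻ p in pairsMeeting C, ‖w p.1 - w p.2‖ₑ ∂kernelMeasure K
        ≤ ∫⁻ p in pairsMeeting C, L * ENNReal.ofReal (min 1 (dist p.1 p.2)) ∂kernelMeasure K :=
          setLIntegral_mono' (measurableSet_pairsMeeting hCm) fun p hp => by
            rw [← ofReal_norm, ← ENNReal.ofReal_coe_nnreal, ← ENNReal.ofReal_mul L.coe_nonneg]
            exact ENNReal.ofReal_le_ofReal (hL p hp)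
      _ = L * ∫⁻ p in pairsMeeting C, ENNReal.ofReal (min 1 (dist p.1 p.2)) ∂kernelMeasure K :=
          lintegral_const_mul' _ _ ENNReal.coe_ne_top
      _ < ⊤ := ENNReal.mul_lt_top ENNReal.coe_lt_top
          (lintegral_min_one_dist_lt_top hK hCm hC.measure_lt_top)
  · calc ∫⁻ x in B, ‖w x‖ₑ ≤ ∫⁻ _ in B, ENNReal.ofReal M :=
          lintegral_mono fun x => by
            rw [← ofReal_norm]
            exact ENNReal.ofReal_le_ofReal (hM x)
      _ < ⊤ := by
          rw [setLIntegral_const]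
          exact ENNReal.mul_lt_top ENNReal.ofReal_lt_top hB

theorem lintegral_enorm_indicator_sub_lt_top (hK : IsPerimeterKernel K) {E U : Set V}
    (hE : MeasurableSet E) (hU : MeasurableSet U) (hfin : kernelPerimeter K E U < ⊤) :
    ∫⁻ p in pairsMeeting U, ‖(E.indicator 1 p.1 - E.indicator 1 p.2 : ℝ)‖ₑ ∂kernelMeasure K <
      ⊤ := by
  have hcut : MeasurableSet (cutPairs E ∩ pairsMeeting U) :=
    (measurableSet_cutPairs hE).inter (measurableSet_pairsMeeting hU)
  have hswap := (measurePreserving_swap_kernelMeasure hK).measure_preimage hcut.nullMeasurableSet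
  rw [kernelPerimeter_eq_kernelMeasure hK.measurable hE hU] at hfin
  calc ∫⁻ p in pairsMeeting U, ‖(E.indicator 1 p.1 - E.indicator 1 p.2 : ℝ)‖ₑ ∂kernelMeasure K
      ≤ ∫⁻ p in pairsMeeting U, (cutPairs E ∪ Prod.swap ⁻¹' cutPairs E).indicator 1 p
          ∂kernelMeasure K := lintegral_mono fun p => by
        by_cases h₁ : p.1 ∈ E <;> by_cases h₂ : p.2 ∈ E <;> simp [cutPairs, h₁, h₂]
    _ = kernelMeasure K ((cutPairs E ∪ Prod.swap ⁻¹' cutPairs E) ∩ pairsMeeting U) := by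
        rw [lintegral_indicator_one ((measurableSet_cutPairs hE).union
          (measurable_swap (measurableSet_cutPairs hE))),
          Measure.restrict_apply' (measurableSet_pairsMeeting hU)]
    _ ≤ kernelMeasure K (cutPairs E ∩ pairsMeeting U) +
          kernelMeasure K (Prod.swap ⁻¹' (cutPairs E ∩ pairsMeeting U)) := by
        rw [union_inter_distrib_right]
        refine (measure_union_le _ _).trans (add_le_add le_rfl (measure_mono ?_))
        exact inter_subset_inter_right _ fun p hp => hp.symm
    _ < ⊤ := by
        rw [hswap]
        exact ENNReal.add_lt_top.2 ⟨hfin, hfin⟩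

theorem isPerimeterKernel_rpow_nnnorm [Nontrivial V] {s : ℝ} (hs : s ∈ Ioo (0 : ℝ) 1) :
    IsPerimeterKernel fun z : V => ‖z‖₊ ^ (-(Module.finrank ℝ V + s)) := by
  refine ⟨measurable_nnnorm.pow_const _, fun z => by rw [nnnorm_neg], ?_⟩
  set d := Module.finrank ℝ V
  have hd : ((d - 1 : ℕ) : ℝ) = d - 1 := Nat.cast_pred Module.finrank_pos
  have hpow : ∀ y : ℝ, 0 < y → y ^ (d - 1) * y ^ (-(d + s)) = y ^ (-1 - s) := fun y hy => by
    rw [← Real.rpow_natCast, hd, ← Real.rpow_add hy]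
    ring_nf
  have hnear : IntegrableOn (fun y : ℝ => y ^ (d - 1) • (min 1 y * y ^ (-(d + s)))) (Ioc 0 1) := by
    have hint : IntegrableOn (fun y : ℝ => y ^ (-s)) (Ioc 0 1) := by
      rw [integrableOn_Ioc_iff_integrableOn_Ioo, intervalIntegral.integrableOn_Ioo_rpow_iff one_pos]
      exact neg_lt_neg hs.2
    refine hint.congr_fun (fun y hy => ?_) measurableSet_Ioc
    simp only [smul_eq_mul, min_eq_right hy.2]
    rw [mul_left_comm, hpow y hy.1, ← Real.rpow_one_add' hy.1.le (by linarith [hs.1])]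
    ring_nf
  have hfar : IntegrableOn (fun y : ℝ => y ^ (d - 1) • (min 1 y * y ^ (-(d + s)))) (Ioi 1) := by
    refine (integrableOn_Ioi_rpow_of_lt (a := -1 - s) (by linarith [hs.1]) one_pos).congr_fun
      (fun y hy => ?_) measurableSet_Ioi
    simp only [smul_eq_mul, min_eq_left (mem_Ioi.1 hy).le, one_mul]
    exact (hpow y (zero_lt_one.trans hy)).symm
  have hint : Integrable fun z : V => min 1 ‖z‖ * ‖z‖ ^ (-(d + s)) := by
    refine (integrable_fun_norm_addHaar volume (f := fun y => min 1 y * y ^ (-(d + s)))).2 ?_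
    rw [← Ioc_union_Ioi_eq_Ioi zero_le_one]
    exact hnear.union hfar
  refine lt_of_eq_of_lt (lintegral_congr fun z => ?_) hint.lintegral_lt_top
  rw [ENNReal.ofReal_mul (by positivity), ← coe_nnnorm z, ← NNReal.coe_rpow,
    ENNReal.ofReal_coe_nnreal]

end Kernel

section Mollification

theorem tendsto_setLIntegral_enorm_translate_sub {G F : Type*} [NormedAddCommGroup G]
    [MeasurableSpace G] [BorelSpace G] [SecondCountableTopology G] [NormedAddCommGroup F]
    (μ : Measure G) [μ.IsAddLeftInvariant] [IsLocallyFiniteMeasure μ] [μ.InnerRegularCompactLTTop]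
    {S T : Set G} (hS : MeasurableSet S) (hT : MeasurableSet T)
    (hST : ∀ᶠ z in 𝓝 (0 : G), ∀ x ∈ S, x - z ∈ T) {h : G → F} (hh : IntegrableOn h T μ) :
    Tendsto (fun z => ∫⁻ x in S, ‖h (x - z) - h x‖ₑ ∂μ) (𝓝 0) (𝓝 0) := by
  have : Fact ((1 : ℝ≥0∞) ≠ ⊤) := ⟨ENNReal.one_ne_top⟩
  have hLp : MemLp (T.indicator h) 1 μ := memLp_one_iff_integrable.2 (hh.integrable_indicator hT)
  have hcont : Continuous fun z : G => (DomAddAct.mk (-z) +ᵥ hLp.toLp _ : Lp F 1 μ) :=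
    (DomAddAct.continuous_mk.comp continuous_neg).vadd continuous_const
  have hdist : Tendsto (fun z : G => edist (DomAddAct.mk (-z) +ᵥ hLp.toLp _ : Lp F 1 μ)
      (hLp.toLp _)) (𝓝 0) (𝓝 0) := by
    have h0 := tendsto_iff_edist_tendsto_0.1 (hcont.tendsto 0)
    simpa only [neg_zero, DomAddAct.mk_zero, zero_vadd] using h0
  refine tendsto_of_tendsto_of_tendsto_of_le_of_le' tendsto_const_nhds hdist
    (Eventually.of_forall fun _ => zero_le) ?_
  filter_upwards [hST] with z hz
  rw [DomAddAct.mk_vadd_toLp, Lp.edist_toLp_toLp, eLpNorm_one_eq_lintegral_enorm]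
  refine (setLIntegral_mono' hS fun x hx => ?_).trans (setLIntegral_le_lintegral S _)
  have hx₀ : x ∈ T := by simpa only [sub_zero] using hST.self_of_nhds x hx
  have hxz : -z + x ∈ T := by simpa only [sub_eq_neg_add] using hz x hx
  simp only [Pi.sub_apply, vadd_eq_add, indicator_of_mem hx₀,
    indicator_of_mem hxz, sub_eq_neg_add, le_refl]

variable {V F : Type*} [NormedAddCommGroup V] [NormedSpace ℝ V] [FiniteDimensional ℝ V]
  [MeasureSpace V] [BorelSpace V] [NormedAddCommGroup F] [NormedSpace ℝ F] {K : V → ℝ≥0}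

theorem setLIntegral_enorm_kernelMeasure (hK : Measurable K) {S : Set (V × V)}
    (hS : MeasurableSet S) {h : V × V → F} (hh : StronglyMeasurable h) :
    ∫⁻ p in S, ‖h p‖ₑ ∂kernelMeasure K = ∫⁻ p in S, ‖K (p.1 - p.2) • h p‖ₑ := by
  rw [kernelMeasure, setLIntegral_withDensity_eq_setLIntegral_mul _
    (measurable_kernel_sub hK).coe_nnreal_ennreal hh.enorm hS]
  refine lintegral_congr fun p => ?_
  rw [NNReal.smul_def, enorm_smul, Pi.mul_apply, Real.enorm_of_nonneg (K _).coe_nonneg,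
    ENNReal.ofReal_coe_nnreal]

variable [(volume : Measure V).IsAddHaarMeasure]

theorem tendsto_sobolevNorm_translate_sub (hK : Measurable K) {v : V → F}
    (hv : StronglyMeasurable v) {C U B W : Set V} (hC : MeasurableSet C) (hU : MeasurableSet U)
    (hB : MeasurableSet B) (hW : MeasurableSet W) (hCU : ∀ᶠ z in 𝓝 (0 : V), ∀ x ∈ C, x - z ∈ U)
    (hBW : ∀ᶠ z in 𝓝 (0 : V), ∀ x ∈ B, x - z ∈ W)
    (hfin : sobolevNorm ((kernelMeasure K).restrict (pairsMeeting U)) (volume.restrict W) v < ⊤) :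
    Tendsto (fun z => sobolevNorm ((kernelMeasure K).restrict (pairsMeeting C))
      (volume.restrict B) fun x => v (x - z) - v x) (𝓝 0) (𝓝 0) := by
  obtain ⟨hpairs, hpoints⟩ := ENNReal.add_lt_top.1 hfin
  have hdiff : ∀ w : V → F, StronglyMeasurable w →
      StronglyMeasurable fun p : V × V => w p.1 - w p.2 := fun w hw =>
    (hw.comp_measurable measurable_fst).sub (hw.comp_measurable measurable_snd)
  have hvz : ∀ z, StronglyMeasurable fun x => v (x - z) - v x := fun z =>
    (hv.comp_measurable (measurable_sub_const z)).sub hv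
  have hint : IntegrableOn (fun p : V × V => K (p.1 - p.2) • (v p.1 - v p.2)) (pairsMeeting U) := by
    refine ⟨((measurable_kernel_sub hK).stronglyMeasurable.smul (hdiff v hv)).aestronglyMeasurable,
      ?_⟩
    rw [hasFiniteIntegral_iff_enorm, ← setLIntegral_enorm_kernelMeasure hK
      (measurableSet_pairsMeeting hU) (hdiff v hv)]
    exact hpairs
  have : (volume : Measure (V × V)).IsAddLeftInvariant := by
    rw [Measure.volume_eq_prod]
    infer_instance
  have hdiag : Tendsto (fun z : V => (z, z)) (𝓝 0) (𝓝 (0, 0)) := by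
    rw [nhds_prod_eq]
    exact tendsto_id.prodMk tendsto_id
  have hCU' : ∀ᶠ q in 𝓝 (0 : V × V), ∀ p ∈ pairsMeeting C, p - q ∈ pairsMeeting U := by
    filter_upwards [continuous_fst.tendsto' _ _ rfl hCU, continuous_snd.tendsto' _ _ rfl hCU]
      with q hq₁ hq₂ p hp
    exact hp.imp (hq₁ p.1) (hq₂ p.2)
  have htranslate := (tendsto_setLIntegral_enorm_translate_sub volume
    (measurableSet_pairsMeeting hC) (measurableSet_pairsMeeting hU) hCU' hint).comp hdiag
  rw [← add_zero (0 : ℝ≥0∞)]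
  refine (htranslate.congr fun z => ?_).add
    (tendsto_setLIntegral_enorm_translate_sub volume hB hW hBW ⟨hv.aestronglyMeasurable, hpoints⟩)
  rw [setLIntegral_enorm_kernelMeasure hK (measurableSet_pairsMeeting hC) (hdiff _ (hvz z))]
  refine lintegral_congr fun p => ?_
  simp only [Prod.fst_sub, Prod.snd_sub, sub_sub_sub_cancel_right, ← smul_sub]
  rw [sub_sub_sub_comm]

theorem exists_smoothing_probabilityMeasure {ε : ℝ} (hε : 0 < ε) :
    ∃ ρ : Measure V, IsProbabilityMeasure ρ ∧ ρ ≪ volume ∧ (∀ᵐ z ∂ρ, ‖z‖ < ε) ∧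
      ∀ v : V → F, LocallyIntegrable v volume →
        ContDiff ℝ (⊤ : ℕ∞) fun x => ∫ z, v (x - z) ∂ρ := by
  let φ : ContDiffBump (0 : V) := ⟨ε / 2, ε, half_pos hε, half_lt_self hε⟩
  have hmeas : Measurable fun z => (φ.normed volume z).toNNReal :=
    φ.continuous_normed.measurable.real_toNNReal
  refine ⟨volume.withDensity fun z => (φ.normed volume z).toNNReal, ⟨?_⟩,
    withDensity_absolutelyContinuous _ _, ?_, fun v hv => ?_⟩
  · rw [withDensity_apply _ MeasurableSet.univ, Measure.restrict_univ]
    exact (ofReal_integral_eq_lintegral_ofReal φ.integrable_normed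
      (ae_of_all _ φ.nonneg_normed)).symm.trans (by rw [φ.integral_normed, ENNReal.ofReal_one])
  · rw [ae_withDensity_iff hmeas.coe_nnreal_ennreal]
    refine ae_of_all _ fun z hz => ?_
    have hsupp : z ∈ Function.support (φ.normed volume) := fun h => hz (by simp [h])
    rw [φ.support_normed_eq] at hsupp
    exact mem_ball_zero_iff.1 hsupp
  · have hconv : (fun x => ∫ z, v (x - z) ∂volume.withDensity fun z =>
        ((φ.normed volume z).toNNReal : ℝ≥0∞)) =
        convolution (φ.normed volume) v (ContinuousLinearMap.lsmul ℝ ℝ) volume := by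
      ext x
      rw [integral_withDensity_eq_integral_smul hmeas, convolution]
      simp only [NNReal.smul_def, Real.coe_toNNReal _ (φ.nonneg_normed _),
        ContinuousLinearMap.lsmul_apply]
    rw [hconv]
    exact φ.hasCompactSupport_normed.contDiff_convolution_left _ φ.contDiff_normed hv

theorem exists_contDiff_sobolevNorm_sub_lt [CompleteSpace F] (hK : Measurable K)
    {v : V → F} (hv : StronglyMeasurable v) {M : ℝ} (hM : ∀ x, ‖v x‖ ≤ M) {C U B W : Set V}
    (hC : MeasurableSet C) (hU : MeasurableSet U) (hB : MeasurableSet B) (hW : MeasurableSet W)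
    (hCU : ∀ᶠ z in 𝓝 (0 : V), ∀ x ∈ C, x - z ∈ U) (hBW : ∀ᶠ z in 𝓝 (0 : V), ∀ x ∈ B, x - z ∈ W)
    (hfin : sobolevNorm ((kernelMeasure K).restrict (pairsMeeting U)) (volume.restrict W) v < ⊤)
    {ε : ℝ} (hε : 0 < ε) {τ : ℝ≥0∞} (hτ : 0 < τ) :
    ∃ f : V → F, ContDiff ℝ (⊤ : ℕ∞) f ∧ (∀ x, f x ∈ closedConvexHull ℝ (range v)) ∧
      (∀ x c, (∀ᵐ y, y ∈ ball x ε → v y = c) → f x = c) ∧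
      sobolevNorm ((kernelMeasure K).restrict (pairsMeeting C)) (volume.restrict B)
        (f - v) < τ := by
  obtain ⟨τ', hτ'₀, hτ'⟩ := exists_between hτ
  obtain ⟨δ, hδ, hclose⟩ := Metric.eventually_nhds_iff.1 ((tendsto_order.1
    (tendsto_sobolevNorm_translate_sub hK hv hC hU hB hW hCU hBW hfin)).2 τ' hτ'₀)
  obtain ⟨ρ, _, hρ, hρsupp, hsmooth⟩ := exists_smoothing_probabilityMeasure (V := V) (F := F)
    (lt_min hε hδ)
  have hint : ∀ x, Integrable (fun z => v (x - z)) ρ := fun x =>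
    .of_bound (hv.comp_measurable (measurable_const_sub x)).aestronglyMeasurable M
      (ae_of_all _ fun _ => hM _)
  have hloc : LocallyIntegrable v volume :=
    (locallyIntegrable_const M).mono hv.aestronglyMeasurable
      (ae_of_all _ fun x => (hM x).trans (le_abs_self M))
  have hsub : (fun x => ∫ z, v (x - z) ∂ρ) - v = fun x => ∫ z, v (x - z) - v x ∂ρ := by
    ext x
    rw [integral_sub (hint x) (integrable_const _), integral_const, probReal_univ, one_smul,
      Pi.sub_apply]
  have hw : StronglyMeasurable fun q : V × V => v (q.2 - q.1) - v q.2 :=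
    (hv.comp_measurable (measurable_snd.sub measurable_fst)).sub (hv.comp_measurable measurable_snd)
  refine ⟨fun x => ∫ z, v (x - z) ∂ρ, hsmooth v hloc, fun x => ?_, fun x c hc => ?_, ?_⟩
  · exact convex_closedConvexHull.integral_mem isClosed_closedConvexHull
      (ae_of_all _ fun z => subset_closedConvexHull (mem_range_self _)) (hint x)
  · have hae : ∀ᵐ z ∂ρ, v (x - z) = c := by
      have hsub_left := (Measure.measurePreserving_sub_left volume x).quasiMeasurePreserving
      filter_upwards [hρ.ae_le (hsub_left.ae hc), hρsupp] with z hz hzε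
      exact hz (by rw [mem_ball, dist_self_sub_left]; exact hzε.trans_le (min_le_left _ _))
    exact (integral_congr_ae hae).trans (by rw [integral_const, probReal_univ, one_smul])
  · rw [hsub]
    refine (sobolevNorm_integral_le ρ hw fun x => (hint x).sub (integrable_const _)).trans_lt
      (lt_of_le_of_lt ?_ hτ')
    calc ∫⁻ z, sobolevNorm ((kernelMeasure K).restrict (pairsMeeting C)) (volume.restrict B)
          (fun x => v (x - z) - v x) ∂ρ
        ≤ ∫⁻ _, τ' ∂ρ := lintegral_mono_ae <| hρsupp.mono fun z hz =>
          (hclose (by rw [dist_zero_right]; exact hz.trans_le (min_le_right _ _))).le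
      _ = τ' := by rw [lintegral_const, measure_univ, mul_one]

end Mollification

section RegularLevel

section Tilt

variable {H : Type*} [NormedAddCommGroup H] [InnerProductSpace ℝ H] {f : H → ℝ} {θ : H → H}
  {δ : ℝ} {a : H}

/-- The perturbation of `f` by the bounded field `⟪a, θ⟫`, which removes degenerate critical points
for almost every `a`. The term `δ * (1 - 2 * f)` contracts `f` towards `1 / 2`, so that the
perturbed function still takes values in `[0, 1]`. -/
def tilt (f : H → ℝ) (θ : H → H) (δ : ℝ) (a : H) (x : H) : ℝ :=
  f x + δ * (1 - 2 * f x) + inner ℝ a (θ x)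

theorem abs_inner_le_of_norm_le (hθ : ∀ x, ‖θ x‖ ≤ 1) (ha : ‖a‖ ≤ δ) (x : H) :
    |inner ℝ a (θ x)| ≤ δ :=
  (abs_real_inner_le_norm a (θ x)).trans
    ((mul_le_of_le_one_right (norm_nonneg a) (hθ x)).trans ha)

theorem tilt_mem_Icc (hf : ∀ x, f x ∈ Icc 0 1) (hθ : ∀ x, ‖θ x‖ ≤ 1) (ha : ‖a‖ ≤ δ)
    (hδ : δ ≤ 1 / 2) (x : H) : tilt f θ δ a x ∈ Icc 0 1 := by
  obtain ⟨hlo, hhi⟩ := abs_le.1 (abs_inner_le_of_norm_le hθ ha x)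
  unfold tilt
  constructor <;> nlinarith [(hf x).1, (hf x).2]

theorem abs_tilt_sub_le (hf : ∀ x, f x ∈ Icc 0 1) (hθ : ∀ x, ‖θ x‖ ≤ 1) (ha : ‖a‖ ≤ δ) (x : H) :
    |tilt f θ δ a x - f x| ≤ 2 * δ := by
  obtain ⟨hlo, hhi⟩ := abs_le.1 (abs_inner_le_of_norm_le hθ ha x)
  unfold tilt
  rw [abs_le]
  constructor <;> nlinarith [(hf x).1, (hf x).2, norm_nonneg a]

theorem sobolevNorm_tilt_sub_le [MeasurableSpace H] (κ : Measure (H × H)) (μ : Measure H)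
    (ha : ‖a‖ ≤ δ) :
    sobolevNorm κ μ (tilt f θ δ a - f) ≤
      ENNReal.ofReal (2 * δ) * sobolevNorm κ μ fun x => (1 - 2 * f x, θ x) := by
  have hδ : 0 ≤ δ := (norm_nonneg a).trans ha
  let L : ℝ × H →L[ℝ] ℝ := (δ • ContinuousLinearMap.id ℝ ℝ).coprod (innerSL ℝ a)
  have hL : ‖L‖ₑ ≤ ENNReal.ofReal (2 * δ) := by
    rw [← ofReal_norm]
    refine ENNReal.ofReal_le_ofReal (L.opNorm_le_bound (by positivity) fun q => ?_)
    calc ‖δ * q.1 + inner ℝ a q.2‖ ≤ δ * ‖q.1‖ + δ * ‖q.2‖ :=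
          norm_add_le_of_le (by rw [norm_mul, Real.norm_of_nonneg hδ])
            ((abs_real_inner_le_norm a _).trans (by gcongr))
      _ ≤ δ * ‖q‖ + δ * ‖q‖ := by gcongr <;> [exact norm_fst_le q; exact norm_snd_le q]
      _ = 2 * δ * ‖q‖ := by ring
  have htilt : tilt f θ δ a - f = L ∘ fun x => (1 - 2 * f x, θ x) := by
    ext x
    exact sub_eq_of_eq_add' (add_assoc _ _ _)
  rw [htilt]
  exact (sobolevNorm_clm_comp_le L _).trans (mul_le_mul_left hL _)

end Tilt

theorem exists_countable_criticalPoints_sobolevNorm_sub_lt {H : Type*} [NormedAddCommGroup H]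
    [InnerProductSpace ℝ H] [FiniteDimensional ℝ H] [MeasureSpace H] [BorelSpace H]
    [(volume : Measure H).IsAddHaarMeasure] {K : H → ℝ≥0} (hK : IsPerimeterKernel K)
    {f : H → ℝ} (hf : ContDiff ℝ (⊤ : ℕ∞) f) (hf₀₁ : ∀ x, f x ∈ Icc 0 1) {C B : Set H}
    (hC : IsBounded C) (hCm : MeasurableSet C) (hB : volume B < ⊤) {η : ℝ} (hη : 0 < η)
    {u : H → ℝ} {τ : ℝ≥0∞}
    (hτ : sobolevNorm ((kernelMeasure K).restrict (pairsMeeting C)) (volume.restrict B)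
      (f - u) < τ) :
    ∃ g : H → ℝ, ContDiff ℝ (⊤ : ℕ∞) g ∧ (∀ x, g x ∈ Icc 0 1) ∧ (∀ x, |g x - f x| < η) ∧
      {x | fderiv ℝ g x = 0}.Countable ∧
      sobolevNorm ((kernelMeasure K).restrict (pairsMeeting C)) (volume.restrict B)
        (g - u) < τ := by
  set θ : OpenPartialHomeomorph H H := OpenPartialHomeomorph.univUnitBall
  have hθ : ∀ x, ‖θ x‖ ≤ 1 := fun x => (mem_ball_zero_iff.1 (θ.map_source (mem_univ x))).le
  have hθ_smooth : ContDiff ℝ (⊤ : ℕ∞) θ := OpenPartialHomeomorph.contDiff_univUnitBall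
  have htwo : (2 : WithTop ℕ∞) ≤ (⊤ : ℕ∞) := by norm_cast
  have hw : ContDiff ℝ 1 fun x => (1 - 2 * f x, θ x) :=
    ((contDiff_const.sub (contDiff_const.mul hf)).prodMk hθ_smooth).of_le (by norm_num)
  have hw_norm : ∀ x, ‖(1 - 2 * f x, θ x)‖ ≤ 1 := fun x =>
    max_le (abs_le.2 (by constructor <;> linarith [(hf₀₁ x).1, (hf₀₁ x).2])) (hθ x)
  obtain ⟨c, hc₀, hc⟩ := ENNReal.exists_nnreal_pos_mul_lt
    (sobolevNorm_restrict_lt_top hK hw hw_norm hC hCm hB).ne (tsub_pos_of_lt hτ).ne'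
  obtain ⟨δ, hδ₀, hδ⟩ := exists_between (lt_min (lt_min (half_pos hη) (half_pos one_pos))
    (half_pos (NNReal.coe_pos.2 hc₀)))
  simp only [lt_min_iff] at hδ
  have hfδ : ContDiff ℝ (⊤ : ℕ∞) fun x => f x + δ * (1 - 2 * f x) :=
    hf.add (contDiff_const.mul (contDiff_const.sub (contDiff_const.mul hf)))
  obtain ⟨a, hcrit, ha⟩ := (Measure.dense_of_ae (ae_countable_criticalPoints_add_inner_comp volume
    (e := θ) rfl (hθ_smooth.of_le htwo) OpenPartialHomeomorph.contDiffOn_univUnitBall_symm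
    (hfδ.of_le htwo))).exists_dist_lt 0 hδ₀
  rw [dist_zero_left] at ha
  have hg : ContDiff ℝ (⊤ : ℕ∞) (tilt f θ δ a) := hfδ.add (contDiff_const.inner ℝ hθ_smooth)
  refine ⟨tilt f θ δ a, hg, tilt_mem_Icc hf₀₁ hθ ha.le hδ.1.2.le,
    fun x => (abs_tilt_sub_le hf₀₁ hθ ha.le x).trans_lt (by linarith), hcrit, ?_⟩
  rw [← sub_add_sub_cancel _ f u]
  refine (sobolevNorm_add_le (hg.continuous.sub hf.continuous).measurable _).trans_lt
    (lt_tsub_iff_right.1 ((sobolevNorm_tilt_sub_le _ _ ha.le).trans_lt (lt_of_le_of_lt ?_ hc)))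
  gcongr
  exact ENNReal.ofReal_le_of_le_toReal (by rw [ENNReal.coe_toReal]; linarith)

theorem ae_kernelPerimeter_superlevel_lt_top {V : Type*} [NormedAddCommGroup V] [NormedSpace ℝ V]
    [FiniteDimensional ℝ V] [MeasureSpace V] [BorelSpace V] [(volume : Measure V).IsAddHaarMeasure]
    {K : V → ℝ≥0} (hK : IsPerimeterKernel K) {g : V → ℝ} (hg : ContDiff ℝ 1 g)
    (hg₀₁ : ∀ x, g x ∈ Icc 0 1) {U : Set V} (hU : IsBounded U) (hUm : MeasurableSet U) :
    ∀ᵐ t ∂volume.restrict (Ioo 0 1), kernelPerimeter K {x | t < g x} U < ⊤ := by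
  have hgm : Measurable g := hg.continuous.measurable
  have hfin : sobolevNorm ((kernelMeasure K).restrict (pairsMeeting U)) (volume.restrict ∅)
      (g - (∅ : Set V).indicator 1) < ⊤ := by
    rw [indicator_empty', sub_zero]
    exact sobolevNorm_restrict_lt_top hK hg (M := 1)
      (fun x => by rw [Real.norm_of_nonneg (hg₀₁ x).1]; exact (hg₀₁ x).2) hU hUm (by simp)
  filter_upwards [ae_lt_top (measurable_cutDist_superlevel hgm MeasurableSet.empty)
    ((lintegral_cutDist_superlevel_le hgm (fun x => (hg₀₁ x).1) (fun x => (hg₀₁ x).2)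
      MeasurableSet.empty).trans_lt hfin).ne] with t ht
  have hempty : cutPairs (∅ : Set V) = ⊥ := empty_prod
  rw [kernelPerimeter_eq_kernelMeasure hK.measurable (measurableSet_lt measurable_const hgm) hUm,
    ← Measure.restrict_apply' (measurableSet_pairsMeeting hUm)]
  simpa only [hempty, symmDiff_bot] using (ENNReal.add_lt_top.1 ht).1

theorem exists_hasSmoothBoundary_of_contDiff {n : ℕ} {K : EuclideanSpace ℝ (Fin n) → ℝ≥0}
    (hK : IsPerimeterKernel K) {f : EuclideanSpace ℝ (Fin n) → ℝ} (hf : ContDiff ℝ (⊤ : ℕ∞) f)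
    (hf₀₁ : ∀ x, f x ∈ Icc 0 1) {E C B : Set (EuclideanSpace ℝ (Fin n))} (hE : MeasurableSet E)
    (hC : IsBounded C) (hCm : MeasurableSet C) (hB : volume B < ⊤) {τ : ℝ≥0∞}
    (hτ : sobolevNorm ((kernelMeasure K).restrict (pairsMeeting C)) (volume.restrict B)
      (f - E.indicator 1) < τ) :
    ∃ F, HasSmoothBoundary F ∧ closure F ⊆ {x | f x ≠ 0} ∧ closure Fᶜ ⊆ {x | f x ≠ 1} ∧
      (∀ R, kernelPerimeter K F (ball 0 R) < ⊤) ∧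
      cutDist ((kernelMeasure K).restrict (pairsMeeting C)) (volume.restrict B) F E < 2 * τ := by
  obtain ⟨g, hg, hg₀₁, hgf, hcrit, hgN⟩ := exists_countable_criticalPoints_sobolevNorm_sub_lt hK hf
    hf₀₁ hC hCm hB (η := 1 / 4) (by norm_num) hτ
  have hhalf : ENNReal.ofReal (3 / 4 - 1 / 4) * (2 * τ) = τ := by
    rw [← mul_assoc, ← ENNReal.ofReal_ofNat, ← ENNReal.ofReal_mul (by norm_num)]
    norm_num
  have hregular : ∀ᵐ t ∂volume.restrict (Ioo (0 : ℝ) 1), t ∉ g '' {x | fderiv ℝ g x = 0} :=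
    (hcrit.image g).ae_notMem _
  have hlocal : ∀ᵐ t ∂volume.restrict (Ioo (0 : ℝ) 1), ∀ j : ℕ,
      kernelPerimeter K {x | t < g x} (ball 0 j) < ⊤ := ae_all_iff.2 fun j =>
    ae_kernelPerimeter_superlevel_lt_top hK (hg.of_le (by norm_num)) hg₀₁ isBounded_ball
      measurableSet_ball
  obtain ⟨t, ht, ⟨hreg, hloc⟩, hcut⟩ := exists_superlevel_cutDist_lt hg.continuous.measurable
    (fun x => (hg₀₁ x).1) (fun x => (hg₀₁ x).2) hE (by norm_num) (by norm_num)
    (hgN.trans_eq hhalf.symm) (hregular.and hlocal)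
  have hlevel : IsOpen {x | t < g x} := isOpen_lt continuous_const hg.continuous
  refine ⟨{x | t < g x}, ⟨g, t, hg, fun x hx hd => hreg ⟨x, hd, hx⟩, rfl⟩, fun x hx hfx => ?_,
    fun x hx hfx => ?_, fun R => ?_, hcut⟩
  · have hgx : t ≤ g x := closure_lt_subset_le continuous_const hg.continuous hx
    linarith [ht.1, (abs_lt.1 (hgf x)).2]
  · have hgx : g x ≤ t := not_lt.1 (hlevel.isClosed_compl.closure_subset hx)
    linarith [ht.2, (abs_lt.1 (hgf x)).1]
  · obtain ⟨j, hj⟩ := exists_nat_ge R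
    exact (kernelPerimeter_mono hK.measurable hlevel.measurableSet measurableSet_ball
      measurableSet_ball (ball_subset_ball hj)).trans_lt (hloc j)

end RegularLevel

section SmoothApproximation

theorem eventually_forall_sub_mem_thickening {V : Type*} [SeminormedAddCommGroup V] (S : Set V)
    {δ : ℝ} (hδ : 0 < δ) : ∀ᶠ z in 𝓝 (0 : V), ∀ x ∈ S, x - z ∈ thickening δ S := by
  filter_upwards [ball_mem_nhds 0 hδ] with z hz x hx
  exact mem_thickening_iff.2 ⟨x, hx, by rwa [dist_self_sub_left, ← mem_ball_zero_iff]⟩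

theorem nonempty_inter_support_restrict {X : Type*} [TopologicalSpace X]
    [HereditarilyLindelofSpace X] [MeasurableSpace X] (μ : Measure X)
    [μ.IsOpenPosMeasure] {E U : Set X} (hE : MeasurableSet E) (hU : IsPreconnected U)
    (hUm : MeasurableSet U) (hin : μ (U ∩ E) ≠ 0) (hout : μ (U ∩ Eᶜ) ≠ 0) :
    (U ∩ ((μ.restrict E).support ∩ (μ.restrict Eᶜ).support)).Nonempty := by
  refine isPreconnected_closed_iff.1 hU _ _ Measure.isClosed_support Measure.isClosed_support ?_
    (Measure.nonempty_inter_support_of_pos ?_) (Measure.nonempty_inter_support_of_pos ?_)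
  · rw [← Measure.support_add, Measure.restrict_add_restrict_compl hE, Measure.support_eq_univ]
    exact subset_univ U
  · rwa [Measure.restrict_apply hUm, pos_iff_ne_zero]
  · rwa [Measure.restrict_apply hUm, pos_iff_ne_zero]

theorem mtBoundary_eq_inter_support {n : ℕ} {E : Set (EuclideanSpace ℝ (Fin n))}
    (hE : MeasurableSet E) :
    mtBoundary E = (volume.restrict E).support ∩ (volume.restrict Eᶜ).support := by
  ext x
  rw [mem_inter_iff, nhds_basis_ball.mem_measureSupport, nhds_basis_ball.mem_measureSupport,
    ← forall₂_and]
  refine forall₂_congr fun r _ => and_congr ?_ ?_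
  · rw [Measure.restrict_apply measurableSet_ball, inter_comm]
  · have hsplit := measure_inter_add_sdiff₀ (μ := volume) (ball x r) hE.nullMeasurableSet
    have hfin : volume (ball x r ∩ E) ≠ ⊤ :=
      measure_ne_top_of_subset inter_subset_left measure_ball_lt_top.ne
    rw [Measure.restrict_apply measurableSet_ball, ← sdiff_eq, inter_comm, ← hsplit]
    exact ⟨fun h => pos_of_lt_add_right h, fun h => ENNReal.lt_add_right hfin h.ne'⟩

variable {n : ℕ} {K : EuclideanSpace ℝ (Fin n) → ℝ≥0} {E C B : Set (EuclideanSpace ℝ (Fin n))}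

theorem exists_hasSmoothBoundary_cutDist_lt (hK : IsPerimeterKernel K)
    {v : EuclideanSpace ℝ (Fin n) → ℝ} (hv : Measurable v) (hv₀₁ : ∀ x, v x ∈ Icc 0 1)
    (hE : MeasurableSet E) (hC : IsBounded C) (hCm : MeasurableSet C) (hB : IsBounded B)
    (hBm : MeasurableSet B) {δ : ℝ} (hδ : 0 < δ)
    (hfin : ∫⁻ p in pairsMeeting (thickening δ C), ‖v p.1 - v p.2‖ₑ ∂kernelMeasure K < ⊤)
    {τ : ℝ≥0∞} (hτ : sobolevNorm ((kernelMeasure K).restrict (pairsMeeting C)) (volume.restrict B)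
      (v - E.indicator 1) < τ) {ε : ℝ} (hε : 0 < ε) :
    ∃ F, HasSmoothBoundary F ∧ (∀ x ∈ closure F, ¬ ∀ᵐ y, y ∈ ball x ε → v y = 0) ∧
      (∀ x ∈ closure Fᶜ, ¬ ∀ᵐ y, y ∈ ball x ε → v y = 1) ∧
      (∀ R, kernelPerimeter K F (ball 0 R) < ⊤) ∧
      cutDist ((kernelMeasure K).restrict (pairsMeeting C)) (volume.restrict B) F E < 2 * τ := by
  have hv_norm : ∀ x, ‖v x‖ ≤ 1 := fun x => by
    rw [Real.norm_of_nonneg (hv₀₁ x).1]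
    exact (hv₀₁ x).2
  have hfin' : sobolevNorm ((kernelMeasure K).restrict (pairsMeeting (thickening δ C)))
      (volume.restrict (thickening 1 B)) v < ⊤ := by
    refine ENNReal.add_lt_top.2 ⟨hfin, ?_⟩
    have : IsFiniteMeasure (volume.restrict (thickening 1 B)) :=
      isFiniteMeasure_restrict.2 hB.thickening.measure_lt_top.ne
    exact (Integrable.of_bound hv.aestronglyMeasurable 1 (ae_of_all _ hv_norm)).hasFiniteIntegral
  obtain ⟨f, hf, hf_range, hf_const, hfv⟩ := exists_contDiff_sobolevNorm_sub_lt hK.measurable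
    hv.stronglyMeasurable hv_norm hCm isOpen_thickening.measurableSet hBm
    isOpen_thickening.measurableSet (eventually_forall_sub_mem_thickening C hδ)
    (eventually_forall_sub_mem_thickening B one_pos) hfin' hε (tsub_pos_of_lt hτ)
  have hf₀₁ : ∀ x, f x ∈ Icc 0 1 := fun x =>
    closedConvexHull_min (range_subset_iff.2 hv₀₁) (convex_Icc 0 1) isClosed_Icc (hf_range x)
  have hfE : sobolevNorm ((kernelMeasure K).restrict (pairsMeeting C)) (volume.restrict B)
      (f - E.indicator 1) < τ := by
    rw [← sub_add_sub_cancel f v]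
    exact (sobolevNorm_add_le (hf.continuous.measurable.sub hv) _).trans_lt
      (lt_tsub_iff_right.1 hfv)
  obtain ⟨F, hF, hF₀, hF₁, hFfin, hFE⟩ :=
    exists_hasSmoothBoundary_of_contDiff hK hf hf₀₁ hE hC hCm hB.measure_lt_top hfE
  exact ⟨F, hF, fun x hx h => hF₀ hx (hf_const x 0 h), fun x hx h => hF₁ hx (hf_const x 1 h),
    hFfin, hFE⟩

theorem exists_hasSmoothBoundary_frontier_subset_thickening (hK : IsPerimeterKernel K)
    (hE : MeasurableSet E) (hC : IsBounded C) (hCm : MeasurableSet C) (hB : IsBounded B)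
    (hBm : MeasurableSet B) {δ : ℝ} (hδ : 0 < δ)
    (hfin : kernelPerimeter K E (thickening δ C) < ⊤) {τ : ℝ≥0∞} (hτ : 0 < τ) {ε : ℝ}
    (hε : 0 < ε) :
    ∃ F, HasSmoothBoundary F ∧ frontier F ⊆ thickening ε (mtBoundary E) ∧
      (∀ R, kernelPerimeter K F (ball 0 R) < ⊤) ∧
      cutDist ((kernelMeasure K).restrict (pairsMeeting C)) (volume.restrict B) F E < τ := by
  have hτ₂ : sobolevNorm ((kernelMeasure K).restrict (pairsMeeting C)) (volume.restrict B)
      (E.indicator 1 - E.indicator 1 : EuclideanSpace ℝ (Fin n) → ℝ) < τ / 2 := by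
    simpa [sobolevNorm] using hτ.ne'
  have hE₀₁ : ∀ x, E.indicator 1 x ∈ Icc (0 : ℝ) 1 := fun x =>
    ⟨indicator_nonneg (fun _ _ => zero_le_one) x, indicator_le_self' (fun _ _ => zero_le_one) x⟩
  obtain ⟨F, hF, hF₀, hF₁, hFfin, hFE⟩ := exists_hasSmoothBoundary_cutDist_lt hK
    (measurable_one.indicator hE) hE₀₁ hE hC hCm hB hBm hδ
    (lintegral_enorm_indicator_sub_lt_top hK hE isOpen_thickening.measurableSet hfin) hτ₂ hε
  refine ⟨F, hF, fun x hx => ?_, hFfin,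
    hFE.trans_eq (ENNReal.mul_div_cancel two_ne_zero ENNReal.ofNat_ne_top)⟩
  rw [frontier_eq_closure_inter_closure] at hx
  obtain ⟨y, hxy, hy⟩ := nonempty_inter_support_restrict volume hE
    (convex_ball x ε).isPreconnected measurableSet_ball
    (fun h => hF₀ x hx.1 <| (measure_eq_zero_iff_ae_notMem.1 h).mono fun y hy hyx =>
      indicator_of_notMem (fun hyE => hy ⟨hyx, hyE⟩) _)
    (fun h => hF₁ x hx.2 <| (measure_eq_zero_iff_ae_notMem.1 h).mono fun y hy hyx =>
      indicator_of_mem (by_contra fun hyE => hy ⟨hyx, hyE⟩) _)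
  rw [← mtBoundary_eq_inter_support hE] at hy
  exact mem_thickening_iff.2 ⟨y, hy, mem_ball'.1 hxy⟩

end SmoothApproximation

section LocalApproximation

theorem exists_seq_isCompact_exhausting {X : Type*} [TopologicalSpace X]
    [LocallyCompactSpace X] [SecondCountableTopology X] {Ω : Set X} (hΩ : IsOpen Ω) :
    ∃ C : ℕ → Set X, (∀ m, IsCompact (C m)) ∧ (∀ m, C m ⊆ Ω) ∧
      ∀ S, IsCompact S → S ⊆ Ω → ∀ᶠ m in atTop, S ⊆ C m := by
  have := hΩ.locallyCompactSpace
  set 𝒞 := CompactExhaustion.choice Ω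
  refine ⟨fun m => (↑) '' 𝒞 m, fun m => (𝒞.isCompact m).image continuous_subtype_val,
    fun m => Subtype.coe_image_subset Ω _, fun S hS hSΩ => ?_⟩
  obtain ⟨k, hk⟩ := 𝒞.exists_superset_of_isCompact
    (IsInducing.subtypeVal.isCompact_preimage_iff (by rwa [Subtype.range_coe]) |>.2 hS)
  filter_upwards [eventually_ge_atTop k] with m hm x hx
  exact ⟨⟨x, hSΩ hx⟩, 𝒞.subset hm (hk hx), rfl⟩

theorem iSup_lt_top_of_tendsto {u : ℕ → ℝ≥0∞} {a : ℝ≥0∞} (ha : a < ⊤) (hu : ∀ h, u h < ⊤)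
    (h : Tendsto u atTop (𝓝 a)) : ⨆ h, u h < ⊤ := by
  lift a to ℝ≥0 using ha.ne
  lift u to ℕ → ℝ≥0 using fun h => (hu h).ne
  exact ENNReal.iSup_coe_lt_top.2 (ENNReal.tendsto_coe.1 h).bddAbove_range

theorem tendsto_measure_of_tendsto_measure_symmDiff {ι X : Type*} [MeasurableSpace X]
    {μ : Measure X} {l : Filter ι} {A : ι → Set X} {B : Set X}
    (h : Tendsto (fun i => μ (A i ∆ B)) l (𝓝 0)) :
    Tendsto (fun i => μ (A i)) l (𝓝 (μ B)) := by
  have hupper : Tendsto (fun i => μ (A i ∆ B) + μ B) l (𝓝 (μ B)) := by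
    simpa only [zero_add] using h.add tendsto_const_nhds
  have hlower : Tendsto (fun i => μ B - μ (A i ∆ B)) l (𝓝 (μ B)) := by
    simpa only [tsub_zero] using
      ENNReal.Tendsto.sub tendsto_const_nhds h (.inr ENNReal.zero_ne_top)
  refine tendsto_of_tendsto_of_tendsto_of_le_of_le hlower hupper (fun i => ?_) fun i => ?_
  · exact tsub_le_iff_left.2
      ((measure_mono (le_symmDiff_sup_left (A i) B)).trans (measure_union_le _ _))
  · exact (measure_mono (le_symmDiff_sup_right (A i) B)).trans (measure_union_le _ _)

section Perimeter

variable {V : Type*} [NormedAddCommGroup V] [NormedSpace ℝ V] [FiniteDimensional ℝ V]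
  [MeasureSpace V] [BorelSpace V] [(volume : Measure V).IsAddHaarMeasure] {K : V → ℝ≥0}

theorem tendsto_kernelPerimeter (hK : Measurable K) {ι : Type*} {l : Filter ι}
    {F : ι → Set V} {E U : Set V} (hF : ∀ i, MeasurableSet (F i)) (hE : MeasurableSet E)
    (hU : MeasurableSet U)
    (h : Tendsto (fun i => (kernelMeasure K).restrict (pairsMeeting U)
      (cutPairs (F i) ∆ cutPairs E)) l (𝓝 0)) :
    Tendsto (fun i => kernelPerimeter K (F i) U) l (𝓝 (kernelPerimeter K E U)) := by
  have hrestrict : ∀ {G : Set V}, MeasurableSet G → kernelPerimeter K G U =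
      (kernelMeasure K).restrict (pairsMeeting U) (cutPairs G) := fun hG => by
    rw [kernelPerimeter_eq_kernelMeasure hK hG hU,
      Measure.restrict_apply' (measurableSet_pairsMeeting hU)]
  simp only [hrestrict (hF _), hrestrict hE]
  exact tendsto_measure_of_tendsto_measure_symmDiff h

end Perimeter

variable {n : ℕ} {K : EuclideanSpace ℝ (Fin n) → ℝ≥0} {E Ω : Set (EuclideanSpace ℝ (Fin n))}

theorem HasSmoothBoundary.isOpen (hE : HasSmoothBoundary E) : IsOpen E := by
  obtain ⟨f, t, hf, -, rfl⟩ := hE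
  exact isOpen_lt continuous_const hf.continuous

theorem locConv_of_tendsto_symmDiff_inter_closedBall {F : ℕ → Set (EuclideanSpace ℝ (Fin n))}
    (h : Tendsto (fun m : ℕ => volume.restrict (closedBall 0 m) (F m ∆ E)) atTop (𝓝 0)) :
    LocConv n F E := by
  intro S hS
  obtain ⟨R, hR⟩ := hS.subset_closedBall 0
  refine tendsto_of_tendsto_of_tendsto_of_le_of_le' tendsto_const_nhds h
    (Eventually.of_forall fun _ => zero_le) ?_
  filter_upwards [tendsto_natCast_atTop_atTop.eventually_ge_atTop R] with m hm
  rw [Measure.restrict_apply' measurableSet_closedBall]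
  exact measure_mono (inter_subset_inter_right _ (hR.trans (closedBall_subset_closedBall hm)))

theorem exists_hasSmoothBoundary_cutDist_lt_of_isCompact (hK : IsPerimeterKernel K)
    (hΩ : IsOpen Ω) (hE : MeasurableSet E)
    (hfin : ∀ U, IsOpen U → IsCompact (closure U) → closure U ⊆ Ω → kernelPerimeter K E U < ⊤)
    {C B : Set (EuclideanSpace ℝ (Fin n))} (hC : IsCompact C) (hCΩ : C ⊆ Ω) (hB : IsBounded B)
    (hBm : MeasurableSet B) {τ : ℝ≥0∞} (hτ : 0 < τ) {ε : ℝ} (hε : 0 < ε) :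
    ∃ F, HasSmoothBoundary F ∧ frontier F ⊆ thickening ε (mtBoundary E) ∧
      (∀ R, kernelPerimeter K F (ball 0 R) < ⊤) ∧
      cutDist ((kernelMeasure K).restrict (pairsMeeting C)) (volume.restrict B) F E < τ := by
  obtain ⟨δ, hδ, hδΩ⟩ := hC.exists_cthickening_subset_open hΩ hCΩ
  have hclosure := closure_thickening_subset_cthickening δ C
  exact exists_hasSmoothBoundary_frontier_subset_thickening hK hE hC.isBounded hC.measurableSet
    hB hBm hδ (hfin _ isOpen_thickening (hC.cthickening.of_isClosed_subset isClosed_closure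
      hclosure) (hclosure.trans hδΩ)) hτ hε

theorem exists_seq_tendsto_kernelPerimeter (hK : IsPerimeterKernel K)
    (hΩ : IsOpen Ω) (hE : MeasurableSet E)
    (hfin : ∀ U, IsOpen U → IsCompact (closure U) → closure U ⊆ Ω → kernelPerimeter K E U < ⊤) :
    ∃ (F : ℕ → Set (EuclideanSpace ℝ (Fin n))) (ε : ℕ → ℝ), (∀ m, HasSmoothBoundary (F m)) ∧
      (∀ m, 0 < ε m) ∧ Tendsto ε atTop (𝓝 0) ∧ LocConv n F E ∧
      (∀ m R, kernelPerimeter K (F m) (ball 0 R) < ⊤) ∧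
      (∀ U, IsOpen U → IsCompact (closure U) → closure U ⊆ Ω →
        Tendsto (fun m => kernelPerimeter K (F m) U) atTop (𝓝 (kernelPerimeter K E U))) ∧
      ∀ m, frontier (F m) ⊆ thickening (ε m) (mtBoundary E) := by
  set ε : ℕ → ℝ := fun m => 1 / (m + 1)
  have hε : ∀ m, 0 < ε m := fun m => Nat.one_div_pos_of_nat
  have hε₀ : Tendsto ε atTop (𝓝 0) := tendsto_one_div_add_atTop_nhds_zero_nat
  obtain ⟨C, hC, hCΩ, hC_exh⟩ := exists_seq_isCompact_exhausting hΩ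
  choose F hF hF_front hF_fin hFE using fun m : ℕ =>
    exists_hasSmoothBoundary_cutDist_lt_of_isCompact hK hΩ hE hfin (hC m) (hCΩ m)
      (isBounded_closedBall (x := 0) (r := m)) measurableSet_closedBall
      (ENNReal.ofReal_pos.2 (hε m)) (hε m)
  have hdist : Tendsto (fun m : ℕ => cutDist ((kernelMeasure K).restrict (pairsMeeting (C m)))
      (volume.restrict (closedBall 0 m)) (F m) E) atTop (𝓝 0) :=
    tendsto_of_tendsto_of_tendsto_of_le_of_le tendsto_const_nhds
      (ENNReal.ofReal_zero ▸ ENNReal.tendsto_ofReal hε₀) (fun _ => zero_le) fun m => (hFE m).le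
  refine ⟨F, ε, hF, hε, hε₀, locConv_of_tendsto_symmDiff_inter_closedBall ?_, hF_fin,
    fun U hU hUc hUΩ => ?_, hF_front⟩
  · exact tendsto_of_tendsto_of_tendsto_of_le_of_le tendsto_const_nhds hdist (fun _ => zero_le)
      fun m => le_add_self
  · refine tendsto_kernelPerimeter hK.measurable (fun m => (hF m).isOpen.measurableSet) hE
      hU.measurableSet ?_
    refine tendsto_of_tendsto_of_tendsto_of_le_of_le' tendsto_const_nhds hdist
      (Eventually.of_forall fun _ => zero_le) ?_
    filter_upwards [hC_exh _ hUc hUΩ] with m hm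
    refine le_add_right (Measure.restrict_mono (pairsMeeting_mono ?_) le_rfl _)
    exact subset_closure.trans hm

end LocalApproximation

section GlobalApproximation

section Cutoff

variable {V : Type*} [SeminormedAddCommGroup V]

/-- The cutoff that is `1` on the ball of radius `R` and vanishes outside the ball of radius
`R + 1`, used to truncate an unbounded set. -/
def normCutoff (R : ℝ) (x : V) : ℝ := max 0 (min 1 (R + 1 - ‖x‖))

theorem normCutoff_mem_Icc (R : ℝ) (x : V) : normCutoff R x ∈ Icc (0 : ℝ) 1 :=
  ⟨le_max_left _ _, max_le zero_le_one (min_le_left _ _)⟩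

theorem lipschitzWith_normCutoff (R : ℝ) : LipschitzWith 1 (normCutoff R : V → ℝ) := by
  have hsub : LipschitzWith 1 fun x : V => R + 1 - ‖x‖ := by
    simpa only [zero_add] using (LipschitzWith.const (R + 1)).sub lipschitzWith_one_norm
  exact (hsub.const_min 1).const_max 0

theorem normCutoff_of_norm_le {R : ℝ} {x : V} (hx : ‖x‖ ≤ R) : normCutoff R x = 1 := by
  rw [normCutoff, min_eq_left (by linarith), max_eq_right zero_le_one]

theorem normCutoff_of_add_one_le_norm {R : ℝ} {x : V} (hx : R + 1 ≤ ‖x‖) :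
    normCutoff R x = 0 := by
  rw [normCutoff, max_eq_left ((min_le_right _ _).trans (by linarith))]

end Cutoff

/-- An integrable majorant for the differences of all the functions `E.indicator η` with `η`
bounded by `1` and `1`-Lipschitz, see `enorm_indicator_sub_le`. -/
noncomputable def indicatorMajorant {X : Type*} [PseudoMetricSpace X] (E : Set X) (p : X × X) :
    ℝ≥0∞ :=
  ‖(E.indicator 1 p.1 - E.indicator 1 p.2 : ℝ)‖ₑ +
    2 * (pairsMeeting E).indicator (fun p => ENNReal.ofReal (min 1 (dist p.1 p.2))) p

theorem enorm_indicator_sub_le {X : Type*} [PseudoMetricSpace X] (E : Set X) {η : X → ℝ}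
    (hη : LipschitzWith 1 η) (hη₁ : ∀ x, ‖η x‖ ≤ 1) (p : X × X) :
    ‖E.indicator η p.1 - E.indicator η p.2‖ₑ ≤ indicatorMajorant E p := by
  unfold indicatorMajorant
  have hη₁' : ∀ x, ‖η x‖ₑ ≤ 1 := fun x => by
    rw [← ofReal_norm, ← ENNReal.ofReal_one]
    exact ENNReal.ofReal_le_ofReal (hη₁ x)
  by_cases h₁ : p.1 ∈ E <;> by_cases h₂ : p.2 ∈ E
  · rw [indicator_of_mem h₁, indicator_of_mem h₂,
      indicator_of_mem (show p ∈ pairsMeeting E from .inl h₁), ← ofReal_norm, ← dist_eq_norm,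
      ← ENNReal.ofReal_ofNat 2, ← ENNReal.ofReal_mul zero_le_two]
    refine le_add_left (ENNReal.ofReal_le_ofReal ?_)
    have hdist : dist (η p.1) (η p.2) ≤ dist p.1 p.2 := by simpa using hη.dist_le_mul p.1 p.2
    have hosc : dist (η p.1) (η p.2) ≤ 2 := by
      linarith [dist_eq_norm (η p.1) (η p.2), norm_sub_le (η p.1) (η p.2), hη₁ p.1, hη₁ p.2]
    rcases le_total 1 (dist p.1 p.2) with h | h
    · rwa [min_eq_left h, mul_one]
    · rw [min_eq_right h]
      linarith [dist_nonneg (x := p.1) (y := p.2)]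
  · simpa [h₁, h₂] using le_add_right (hη₁' p.1)
  · simpa [h₁, h₂] using le_add_right (hη₁' p.2)
  · simp [h₁, h₂]

section Perimeter

variable {V : Type*} [NormedAddCommGroup V] [NormedSpace ℝ V] [FiniteDimensional ℝ V]
  [MeasureSpace V] [BorelSpace V] [(volume : Measure V).IsAddHaarMeasure] {K : V → ℝ≥0}
  {E : Set V}

theorem lintegral_indicatorMajorant_lt_top (hK : IsPerimeterKernel K) (hE : MeasurableSet E)
    (hvol : volume E < ⊤) (hfin : kernelPerimeter K E univ < ⊤) :
    ∫⁻ p, indicatorMajorant E p ∂kernelMeasure K < ⊤ := by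
  have hind : Measurable (E.indicator 1 : V → ℝ) := measurable_one.indicator hE
  have henergy := lintegral_enorm_indicator_sub_lt_top hK hE MeasurableSet.univ hfin
  rw [pairsMeeting_univ, Measure.restrict_univ] at henergy
  have hpair : Measurable fun p : V × V => ‖(E.indicator 1 p.1 - E.indicator 1 p.2 : ℝ)‖ₑ :=
    ((hind.comp measurable_fst).sub (hind.comp measurable_snd)).enorm
  unfold indicatorMajorant
  rw [lintegral_add_left hpair, lintegral_const_mul' _ _ ENNReal.ofNat_ne_top,
    lintegral_indicator (measurableSet_pairsMeeting hE)]
  exact ENNReal.add_lt_top.2 ⟨henergy, ENNReal.mul_lt_top ENNReal.ofNat_lt_top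
    (lintegral_min_one_dist_lt_top hK hE hvol)⟩

theorem lintegral_enorm_indicator_sub_lt_top_of_lipschitzWith (hK : IsPerimeterKernel K)
    (hE : MeasurableSet E) (hvol : volume E < ⊤) (hfin : kernelPerimeter K E univ < ⊤)
    {η : V → ℝ} (hη : LipschitzWith 1 η) (hη₁ : ∀ x, ‖η x‖ ≤ 1) :
    ∫⁻ p, ‖E.indicator η p.1 - E.indicator η p.2‖ₑ ∂kernelMeasure K < ⊤ :=
  (lintegral_mono (enorm_indicator_sub_le E hη hη₁)).trans_lt
    (lintegral_indicatorMajorant_lt_top hK hE hvol hfin)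

theorem tendsto_sobolevNorm_indicator_zero (hK : IsPerimeterKernel K) (hE : MeasurableSet E)
    (hvol : volume E < ⊤) (hfin : kernelPerimeter K E univ < ⊤) {η : ℕ → V → ℝ}
    (hη : ∀ k, LipschitzWith 1 (η k)) (hη₁ : ∀ k x, ‖η k x‖ ≤ 1)
    (hη₀ : ∀ x, Tendsto (η · x) atTop (𝓝 0)) :
    Tendsto (fun k => sobolevNorm (kernelMeasure K) volume (E.indicator (η k))) atTop (𝓝 0) := by
  have hmeas : ∀ k, Measurable (E.indicator (η k)) := fun k =>
    (hη k).continuous.measurable.indicator hE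
  have hlim : ∀ x, Tendsto (fun k => E.indicator (η k) x) atTop (𝓝 0) := fun x => by
    by_cases hx : x ∈ E
    · simpa only [indicator_of_mem hx] using hη₀ x
    · simpa only [indicator_of_notMem hx] using tendsto_const_nhds
  have hpair : Tendsto (fun k => ∫⁻ p, ‖E.indicator (η k) p.1 - E.indicator (η k) p.2‖ₑ
      ∂kernelMeasure K) atTop (𝓝 (∫⁻ _, 0 ∂kernelMeasure K)) := by
    refine tendsto_lintegral_of_dominated_convergence _
      (fun k => (((hmeas k).comp measurable_fst).sub ((hmeas k).comp measurable_snd)).enorm)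
      (fun k => ae_of_all _ (enorm_indicator_sub_le E (hη k) (hη₁ k)))
      (lintegral_indicatorMajorant_lt_top hK hE hvol hfin).ne (ae_of_all _ fun p => ?_)
    simpa only [sub_zero, enorm_zero] using ((hlim p.1).sub (hlim p.2)).enorm
  have hpoint : Tendsto (fun k => ∫⁻ x, ‖E.indicator (η k) x‖ₑ) atTop
      (𝓝 (∫⁻ _ : V, 0)) := by
    refine tendsto_lintegral_of_dominated_convergence (E.indicator 1) (fun k => (hmeas k).enorm)
      (fun k => ae_of_all _ fun x => ?_) ?_ (ae_of_all _ fun x => ?_)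
    · refine (enorm_indicator_eq_indicator_enorm _ _).trans_le (indicator_le_indicator ?_)
      rw [Pi.one_apply, ← ofReal_norm, ← ENNReal.ofReal_one]
      exact ENNReal.ofReal_le_ofReal (hη₁ k x)
    · rw [lintegral_indicator_one hE]
      exact hvol.ne
    · simpa only [enorm_zero] using (hlim x).enorm
  simpa only [sobolevNorm, lintegral_zero, add_zero] using hpair.add hpoint

end Perimeter

theorem tendsto_measure_sdiff_zero {X : Type*} [MeasurableSpace X] {μ : Measure X}
    {S : Set X} (hS : MeasurableSet S) (hfin : μ S ≠ ⊤) {A : ℕ → Set X}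
    (hA : ∀ k, MeasurableSet (A k)) (hmono : Monotone A) (hcover : S ⊆ ⋃ k, A k) :
    Tendsto (fun k => μ (S \ A k)) atTop (𝓝 0) := by
  have h := tendsto_measure_iInter_atTop (fun k => (hS.diff (hA k)).nullMeasurableSet)
    (fun i j hij => sdiff_subset_sdiff_right (hmono hij))
    ⟨0, measure_ne_top_of_subset sdiff_subset hfin⟩
  rwa [← sdiff_iUnion, sdiff_eq_empty.2 hcover, measure_empty] at h

theorem cutDist_le_restrict_add {X : Type*} [MeasurableSpace X] (κ : Measure (X × X))
    (μ : Measure X) {F C : Set X} (hC : MeasurableSet C) (hF : F ⊆ C) (E : Set X) :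
    cutDist κ μ F E ≤ cutDist (κ.restrict (pairsMeeting C)) (μ.restrict C) F E +
      (κ (cutPairs E \ pairsMeeting C) + μ (E \ C)) := by
  have hsplit : ∀ {Y : Type _} [MeasurableSpace Y] (ν : Measure Y) {A B D : Set Y},
      MeasurableSet D → A ⊆ D → ν (A ∆ B) ≤ ν.restrict D (A ∆ B) + ν (B \ D) := by
    intro Y _ ν A B D hD hAD
    rw [Measure.restrict_apply' hD]
    refine (measure_le_inter_add_sdiff ν _ D).trans (add_le_add le_rfl (measure_mono ?_))
    rintro y ⟨⟨hyA, -⟩ | ⟨hyB, -⟩, hyD⟩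
    · exact absurd (hAD hyA) hyD
    · exact ⟨hyB, hyD⟩
  rw [cutDist, cutDist, add_add_add_comm]
  exact add_le_add (hsplit κ (measurableSet_pairsMeeting hC)
    (cutPairs_subset_pairsMeeting hF)) (hsplit μ hC hF)

variable {n : ℕ} {K : EuclideanSpace ℝ (Fin n) → ℝ≥0} {E : Set (EuclideanSpace ℝ (Fin n))}

theorem exists_hasSmoothBoundary_subset_closedBall (hK : IsPerimeterKernel K)
    (hE : MeasurableSet E) (hvol : volume E < ⊤) (hfin : kernelPerimeter K E univ < ⊤) (R : ℝ)
    {τ : ℝ≥0∞} (hτ : sobolevNorm (kernelMeasure K) volume (E.indicator (normCutoff R - 1)) < τ) :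
    ∃ F, HasSmoothBoundary F ∧ F ⊆ closedBall 0 (R + 2) ∧
      kernelPerimeter K F univ < ⊤ ∧
      cutDist ((kernelMeasure K).restrict (pairsMeeting (closedBall 0 (R + 2))))
        (volume.restrict (closedBall 0 (R + 2))) F E < 2 * τ := by
  have hind₀₁ : ∀ x, E.indicator (normCutoff R) x ∈ Icc (0 : ℝ) 1 := fun x =>
    ⟨indicator_nonneg (fun x _ => (normCutoff_mem_Icc R x).1) x,
      indicator_apply_le' (fun _ => (normCutoff_mem_Icc R x).2) fun _ => zero_le_one⟩
  have hnorm : ∀ x : EuclideanSpace ℝ (Fin n), ‖normCutoff R x‖ ≤ 1 := fun x => by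
    rw [Real.norm_of_nonneg (normCutoff_mem_Icc R x).1]
    exact (normCutoff_mem_Icc R x).2
  rw [indicator_sub'] at hτ
  obtain ⟨F, hF, hF₀, -, hFfin, hFE⟩ := exists_hasSmoothBoundary_cutDist_lt hK
    ((lipschitzWith_normCutoff R).continuous.measurable.indicator hE) hind₀₁ hE
    (isBounded_closedBall (x := 0) (r := R + 2)) measurableSet_closedBall
    (isBounded_closedBall (x := 0) (r := R + 2)) measurableSet_closedBall one_pos
    ((setLIntegral_le_lintegral _ _).trans_lt
      (lintegral_enorm_indicator_sub_lt_top_of_lipschitzWith hK hE hvol hfin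
        (lipschitzWith_normCutoff R) hnorm))
    ((add_le_add (setLIntegral_le_lintegral _ _) (setLIntegral_le_lintegral _ _)).trans_lt hτ)
    one_pos
  have hFR : F ⊆ closedBall 0 (R + 2) := fun x hx => by
    by_contra hxR
    refine hF₀ x (subset_closure hx) (ae_of_all _ fun y hy => indicator_apply_eq_zero.2 fun _ =>
      normCutoff_of_add_one_le_norm ?_)
    rw [mem_closedBall_zero_iff] at hxR
    rw [mem_ball_iff_norm'] at hy
    linarith [norm_sub_norm_le x y]
  refine ⟨F, hF, hFR, ?_, hFE⟩
  rw [← kernelPerimeter_eq_kernelPerimeter_univ hK.measurable hF.isOpen.measurableSet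
    measurableSet_ball (hFR.trans (closedBall_subset_ball (lt_add_one (R + 2))))]
  exact hFfin _

theorem tendsto_sobolevNorm_indicator_normCutoff_sub_one (hK : IsPerimeterKernel K)
    (hE : MeasurableSet E) (hvol : volume E < ⊤) (hfin : kernelPerimeter K E univ < ⊤) :
    Tendsto (fun k : ℕ => sobolevNorm (kernelMeasure K) volume
      (E.indicator (normCutoff k - 1 : EuclideanSpace ℝ (Fin n) → ℝ))) atTop (𝓝 0) := by
  refine tendsto_sobolevNorm_indicator_zero hK hE hvol hfin (fun k => ?_) (fun k x => ?_)
    fun x => ?_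
  · rw [← add_zero 1]
    exact (lipschitzWith_normCutoff k).sub (LipschitzWith.const 1)
  · have hx := normCutoff_mem_Icc k x
    rw [Pi.sub_apply, Pi.one_apply, Real.norm_eq_abs, abs_le]
    constructor <;> linarith [hx.1, hx.2]
  · refine tendsto_const_nhds.congr' ?_
    filter_upwards [tendsto_natCast_atTop_atTop.eventually_ge_atTop ‖x‖] with k hk
    rw [Pi.sub_apply, Pi.one_apply, normCutoff_of_norm_le hk, sub_self]

theorem tendsto_outside_closedBall_zero (hK : IsPerimeterKernel K)
    (hE : MeasurableSet E) (hvol : volume E < ⊤) (hfin : kernelPerimeter K E univ < ⊤) :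
    Tendsto (fun k : ℕ => kernelMeasure K (cutPairs E \ pairsMeeting (closedBall 0 (k + 2))) +
      volume (E \ closedBall 0 (k + 2))) atTop (𝓝 0) := by
  have hmono : Monotone fun k : ℕ => closedBall (0 : EuclideanSpace ℝ (Fin n)) (k + 2) :=
    fun i j hij => closedBall_subset_closedBall (by gcongr)
  have hcover : ∀ x : EuclideanSpace ℝ (Fin n), ∃ k : ℕ, x ∈ closedBall 0 (k + 2 : ℝ) := by
    intro x
    obtain ⟨k, hk⟩ := exists_nat_ge ‖x‖
    exact ⟨k, mem_closedBall_zero_iff.2 (by linarith)⟩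
  rw [kernelPerimeter_eq_kernelMeasure hK.measurable hE MeasurableSet.univ, pairsMeeting_univ,
    inter_univ] at hfin
  rw [← add_zero (0 : ℝ≥0∞)]
  exact (tendsto_measure_sdiff_zero (measurableSet_cutPairs hE) hfin.ne
      (fun k => measurableSet_pairsMeeting measurableSet_closedBall)
      (fun i j hij => pairsMeeting_mono (hmono hij))
      fun p _ => mem_iUnion.2 ((hcover p.1).imp fun k hk => .inl hk)).add
    (tendsto_measure_sdiff_zero hE hvol.ne (fun k => measurableSet_closedBall) hmono
      fun x _ => mem_iUnion.2 (hcover x))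

theorem exists_hasSmoothBoundary_isBounded_cutDist_lt (hK : IsPerimeterKernel K)
    (hE : MeasurableSet E) (hvol : volume E < ⊤) (hfin : kernelPerimeter K E univ < ⊤)
    {τ : ℝ≥0∞} (hτ : 0 < τ) :
    ∃ F, (HasSmoothBoundary F ∧ IsBounded F) ∧ kernelPerimeter K F univ < ⊤ ∧
      cutDist (kernelMeasure K) volume F E < τ := by
  have hτ₂ : 0 < τ / 2 := ENNReal.half_pos hτ.ne'
  obtain ⟨k, hkN, hkout⟩ :=
    ((tendsto_sobolevNorm_indicator_normCutoff_sub_one hK hE hvol hfin).eventually_lt_const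
      (ENNReal.half_pos hτ₂.ne')).and
    ((tendsto_outside_closedBall_zero hK hE hvol hfin).eventually_lt_const hτ₂) |>.exists
  obtain ⟨F, hF, hFk, hFfin, hFE⟩ :=
    exists_hasSmoothBoundary_subset_closedBall hK hE hvol hfin k hkN
  rw [ENNReal.mul_div_cancel two_ne_zero ENNReal.ofNat_ne_top] at hFE
  refine ⟨F, ⟨hF, isBounded_closedBall.subset hFk⟩, hFfin, ?_⟩
  calc cutDist (kernelMeasure K) volume F E
      ≤ _ := cutDist_le_restrict_add _ _ measurableSet_closedBall hFk E
    _ < τ / 2 + τ / 2 := ENNReal.add_lt_add hFE hkout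
    _ = τ := ENNReal.add_halves τ

end GlobalApproximation

section Approximation

variable {n : ℕ} {K : EuclideanSpace ℝ (Fin n) → ℝ≥0} {E Ω : Set (EuclideanSpace ℝ (Fin n))}

theorem Ps_eq_kernelPerimeter (s : ℝ) (E U : Set (EuclideanSpace ℝ (Fin n))) :
    Ps n s E U = kernelPerimeter (fun z => ‖z‖₊ ^ (-(n + s))) E U := by
  have hLs : ∀ A B, Ls n s A B = kernelInteraction (fun z => ‖z‖₊ ^ (-(n + s))) A B :=
    fun A B => by
      simp only [Ls, kernelInteraction, dist_eq_norm, ← coe_nnnorm, ← NNReal.coe_rpow,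
        ENNReal.ofReal_coe_nnreal]
  simp only [Ps, kernelPerimeter, hLs]

theorem exists_seq_isBounded_tendsto_kernelPerimeter (hK : IsPerimeterKernel K)
    (hE : MeasurableSet E) (hvol : volume E < ⊤) (hfin : kernelPerimeter K E univ < ⊤) :
    ∃ F : ℕ → Set (EuclideanSpace ℝ (Fin n)), (∀ k, HasSmoothBoundary (F k) ∧ IsBounded (F k)) ∧
      (∀ k, kernelPerimeter K (F k) univ < ⊤) ∧
      Tendsto (fun k => volume (F k ∆ E)) atTop (𝓝 0) ∧
      Tendsto (fun k => kernelPerimeter K (F k) univ) atTop (𝓝 (kernelPerimeter K E univ)) := by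
  obtain ⟨τ, -, hτ, hτ₀⟩ := exists_seq_strictAnti_tendsto' ENNReal.zero_lt_top
  choose F hF hFfin hFE using fun k =>
    exists_hasSmoothBoundary_isBounded_cutDist_lt hK hE hvol hfin (hτ k).1
  have hdist : Tendsto (fun k => cutDist (kernelMeasure K) volume (F k) E) atTop (𝓝 0) :=
    tendsto_of_tendsto_of_tendsto_of_le_of_le tendsto_const_nhds hτ₀ (fun _ => zero_le)
      fun k => (hFE k).le
  refine ⟨F, hF, hFfin, tendsto_of_tendsto_of_tendsto_of_le_of_le tendsto_const_nhds hdist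
    (fun _ => zero_le) fun _ => le_add_self, ?_⟩
  refine tendsto_kernelPerimeter hK.measurable (fun k => (hF k).1.isOpen.measurableSet) hE
    MeasurableSet.univ ?_
  rw [pairsMeeting_univ, Measure.restrict_univ]
  exact tendsto_of_tendsto_of_tendsto_of_le_of_le tendsto_const_nhds hdist (fun _ => zero_le)
    fun _ => le_self_add

theorem locConv_of_tendsto_volume_symmDiff {F : ℕ → Set (EuclideanSpace ℝ (Fin n))}
    (h : Tendsto (fun k => volume (F k ∆ E)) atTop (𝓝 0)) : LocConv n F E := fun _ _ =>
  tendsto_of_tendsto_of_tendsto_of_le_of_le tendsto_const_nhds h (fun _ => zero_le)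
    fun _ => measure_mono inter_subset_left

theorem approximation_by_smooth_sets_general (hK : IsPerimeterKernel K) (hΩ : IsOpen Ω)
    (hE : MeasurableSet E) :
    ((∀ Ω' : Set (EuclideanSpace ℝ (Fin n)), IsOpen Ω' → IsCompact (closure Ω') →
        closure Ω' ⊆ Ω → kernelPerimeter K E Ω' < ⊤)
      ↔ ∃ (Eh : ℕ → Set (EuclideanSpace ℝ (Fin n))) (ε : ℕ → ℝ),
          (∀ h, HasSmoothBoundary (Eh h)) ∧
          (∀ h, 0 < ε h) ∧ Tendsto ε atTop (𝓝 0) ∧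
          LocConv n Eh E ∧
          (∀ Ω' : Set (EuclideanSpace ℝ (Fin n)), IsOpen Ω' → IsCompact (closure Ω') →
            closure Ω' ⊆ Ω → (⨆ h, kernelPerimeter K (Eh h) Ω') < ⊤) ∧
          (∀ Ω' : Set (EuclideanSpace ℝ (Fin n)), IsOpen Ω' → IsCompact (closure Ω') →
            closure Ω' ⊆ Ω →
            Tendsto (fun h => kernelPerimeter K (Eh h) Ω') atTop
              (𝓝 (kernelPerimeter K E Ω'))) ∧
          (∀ h, frontier (Eh h) ⊆ thickening (ε h) (mtBoundary E)))
    ∧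
    (volume E < ⊤ → kernelPerimeter K E univ < ⊤ →
      ∃ Eh : ℕ → Set (EuclideanSpace ℝ (Fin n)),
        (∀ h, HasSmoothBoundary (Eh h) ∧ IsBounded (Eh h)) ∧
        LocConv n Eh E ∧
        (⨆ h, kernelPerimeter K (Eh h) univ) < ⊤ ∧
        Tendsto (fun h => volume (Eh h ∆ E)) atTop (𝓝 0) ∧
        Tendsto (fun h => kernelPerimeter K (Eh h) univ) atTop
          (𝓝 (kernelPerimeter K E univ))) := by
  refine ⟨⟨fun hfin => ?_, fun ⟨Eh, _, _, _, _, _, hsup, hlim, _⟩ U hU hUc hUΩ => ?_⟩,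
    fun hvol hfin => ?_⟩
  · obtain ⟨F, ε, hF, hε, hε₀, hFE, hball, hlim, hfront⟩ :=
      exists_seq_tendsto_kernelPerimeter hK hΩ hE hfin
    refine ⟨F, ε, hF, hε, hε₀, hFE, fun U hU hUc hUΩ => ?_, hlim, hfront⟩
    obtain ⟨R, hR⟩ := (hUc.isBounded.subset subset_closure).subset_ball 0
    exact iSup_lt_top_of_tendsto (hfin U hU hUc hUΩ) (fun h => (kernelPerimeter_mono hK.measurable
      (hF h).isOpen.measurableSet hU.measurableSet measurableSet_ball hR).trans_lt (hball h R))
      (hlim U hU hUc hUΩ)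
  · exact (le_of_tendsto' (hlim U hU hUc hUΩ) (le_iSup _)).trans_lt (hsup U hU hUc hUΩ)
  · obtain ⟨F, hF, hFfin, hFE, hlim⟩ :=
      exists_seq_isBounded_tendsto_kernelPerimeter hK hE hvol hfin
    exact ⟨F, hF, locConv_of_tendsto_volume_symmDiff hFE,
      iSup_lt_top_of_tendsto hfin hFfin hlim, hFE, hlim⟩

end Approximation

/-- Theorem 1.1: a set `E` has locally finite `s`-perimeter in an open set `Ω`
if and only if it can be approximated by smooth open sets as in the statement; moreover, when
`Ω = ℝⁿ`, `|E| < ∞` and `Pₛ(E) < ∞`, the approximating sets can be taken bounded, converging to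
`E` in measure globally and with convergence of the global `s`-perimeters. -/
theorem approximation_by_smooth_sets
    (n : ℕ) (hn : 1 ≤ n) (s : ℝ) (hs : s ∈ Set.Ioo (0 : ℝ) 1)
    (Ω : Set (EuclideanSpace ℝ (Fin n))) (hΩ : IsOpen Ω)
    (E : Set (EuclideanSpace ℝ (Fin n))) (hE : MeasurableSet E)
    (hEnorm : frontier E = mtBoundary E) :
    ((∀ Ω' : Set (EuclideanSpace ℝ (Fin n)), IsOpen Ω' → IsCompact (closure Ω') →
        closure Ω' ⊆ Ω → Ps n s E Ω' < ⊤)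
      ↔ ∃ (Eh : ℕ → Set (EuclideanSpace ℝ (Fin n))) (ε : ℕ → ℝ),
          (∀ h, HasSmoothBoundary (Eh h)) ∧
          (∀ h, 0 < ε h) ∧ Tendsto ε atTop (𝓝 0) ∧
          -- (i)
          LocConv n Eh E ∧
          (∀ Ω' : Set (EuclideanSpace ℝ (Fin n)), IsOpen Ω' → IsCompact (closure Ω') →
            closure Ω' ⊆ Ω → (⨆ h, Ps n s (Eh h) Ω') < ⊤) ∧
          -- (ii)
          (∀ Ω' : Set (EuclideanSpace ℝ (Fin n)), IsOpen Ω' → IsCompact (closure Ω') →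
            closure Ω' ⊆ Ω →
            Tendsto (fun h => Ps n s (Eh h) Ω') atTop (𝓝 (Ps n s E Ω'))) ∧
          -- (iii)
          (∀ h, frontier (Eh h) ⊆ Metric.thickening (ε h) (frontier E)))
    ∧
    (Ω = Set.univ → volume E < ⊤ → Ps n s E Set.univ < ⊤ →
      ∃ Eh : ℕ → Set (EuclideanSpace ℝ (Fin n)),
        (∀ h, HasSmoothBoundary (Eh h) ∧ IsBounded (Eh h)) ∧
        LocConv n Eh E ∧
        (⨆ h, Ps n s (Eh h) Set.univ) < ⊤ ∧
        Tendsto (fun h => volume (Eh h ∆ E)) atTop (𝓝 0) ∧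
        Tendsto (fun h => Ps n s (Eh h) Set.univ) atTop (𝓝 (Ps n s E Set.univ))) := by
  have : Nontrivial (EuclideanSpace ℝ (Fin n)) :=
    Module.nontrivial_of_finrank_pos (R := ℝ) (by rwa [finrank_euclideanSpace_fin])
  have hK := isPerimeterKernel_rpow_nnnorm (V := EuclideanSpace ℝ (Fin n)) hs
  rw [finrank_euclideanSpace_fin] at hK
  simp only [hEnorm, Ps_eq_kernelPerimeter]
  exact (approximation_by_smooth_sets_general hK hΩ hE).imp_right fun h _ => h
end

section
/- Let s ∈ (0,1) and let A_k, B_k, A, B ⊆ ℝ^n be measurable sets with A_k →loc A, B_k →loc B, and such that A, B are disjoint and each pair A_k, B_k is disjoint. Then L_s(A,B) ≤ liminf_{k→∞} L_s(A_k,B_k). In particular, if E_k →loc E and Ω_k →loc Ω with Ω_k, Ω open, then P_s(E,Ω) ≤ liminf_{k→∞} P_s(E_k,Ω_k). -/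
open MeasureTheory Set Filter Topology Metric Bornology
open scoped ENNReal NNReal symmDiff

def SMinimal (n : ℕ) (s : ℝ) (E Ω : Set (EuclideanSpace ℝ (Fin n))) : Prop :=
  Ps n s E Ω < ⊤ ∧ ∀ F : Set (EuclideanSpace ℝ (Fin n)), MeasurableSet F →
    volume ((F \ Ω) ∆ (E \ Ω)) = 0 → Ps n s E Ω ≤ Ps n s F Ω

/-!
If `f` is bounded by `c`, then `∫_s f ≤ ∫_t f + c μ(s \ t)`. Hence the integral of `f` over `t i`
is asymptotically at least its integral over `s` as soon as `μ(s \ t i) → 0`; only the mass of `s`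
missing from `t i` matters. Truncating `f` at height `N` removes the bound, and exhausting `s` by
sets of finite measure makes the convergence local. For the interaction functional, `s` is the
product `A ×ˢ B`, exhausted by the products of `A` and `B` cut off at radius `N`. The fractional
perimeter is a sum of three interactions between sets that are again locally convergent, and
`liminf` is superadditive.
-/

section LowerSemicontinuity

variable {α β ι : Type*} [MeasurableSpace α] [MeasurableSpace β] {μ : Measure α} {ν : Measure β}
  {l : Filter ι}

theorem liminf_add_liminf_le_liminf_add (u v : ι → ℝ≥0∞) :
    liminf u l + liminf v l ≤ liminf (fun i => u i + v i) l := by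
  rw [liminf_eq (u := u), liminf_eq (u := v), sSup_eq_iSup, sSup_eq_iSup]
  refine ENNReal.biSup_add_biSup_le ⟨0, by simp⟩ ⟨0, by simp⟩ fun a ha b hb => ?_
  refine le_liminf_of_le (by isBoundedDefault) ?_
  filter_upwards [ha, hb] with i hai hbi
  exact add_le_add hai hbi

theorem setLIntegral_le_setLIntegral_add_const_mul_measure_sdiff {f : α → ℝ≥0∞} {c : ℝ≥0∞}
    (hf : ∀ x, f x ≤ c) (s t : Set α) :
    ∫⁻ x in s, f x ∂μ ≤ ∫⁻ x in t, f x ∂μ + c * μ (s \ t) :=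
  calc ∫⁻ x in s, f x ∂μ
      ≤ ∫⁻ x in t ∪ s \ t, f x ∂μ := lintegral_mono_set (by simp)
    _ ≤ ∫⁻ x in t, f x ∂μ + ∫⁻ x in s \ t, f x ∂μ := lintegral_union_le f t (s \ t)
    _ ≤ ∫⁻ x in t, f x ∂μ + ∫⁻ _ in s \ t, c ∂μ := by gcongr with x; exact hf x
    _ = ∫⁻ x in t, f x ∂μ + c * μ (s \ t) := by rw [setLIntegral_const]

theorem lintegral_eq_iSup_lintegral_min_natCast {f : α → ℝ≥0∞} (hf : Measurable f) :
    ∫⁻ x, f x ∂μ = ⨆ N : ℕ, ∫⁻ x, min (f x) N ∂μ := by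
  rw [← lintegral_iSup (fun N => hf.min measurable_const)]
  · simp only [← inf_iSup_eq, ENNReal.iSup_natCast, inf_top_eq]
  · intro M N hMN x
    dsimp only
    gcongr

theorem setLIntegral_le_liminf_of_tendsto_measure_sdiff {f : α → ℝ≥0∞} (hf : Measurable f)
    {s : Set α} {t : ι → Set α} (ht : Tendsto (fun i => μ (s \ t i)) l (𝓝 0)) :
    ∫⁻ x in s, f x ∂μ ≤ liminf (fun i => ∫⁻ x in t i, f x ∂μ) l := by
  rw [lintegral_eq_iSup_lintegral_min_natCast hf]
  refine iSup_le fun N => ?_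
  have hzero : Tendsto (fun i => N * μ (s \ t i)) l (𝓝 0) := by
    simpa using ENNReal.Tendsto.const_mul ht (Or.inr (ENNReal.natCast_ne_top N))
  calc ∫⁻ x in s, min (f x) N ∂μ
      ≤ liminf ((fun i => ∫⁻ x in t i, min (f x) N ∂μ) + fun i => N * μ (s \ t i)) l :=
        le_liminf_of_le (by isBoundedDefault) <| Eventually.of_forall fun i =>
          setLIntegral_le_setLIntegral_add_const_mul_measure_sdiff
            (fun _ => min_le_right _ _) s (t i)
    _ = liminf (fun i => ∫⁻ x in t i, min (f x) N ∂μ) l :=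
        ENNReal.liminf_add_of_right_tendsto_zero hzero _
    _ ≤ liminf (fun i => ∫⁻ x in t i, f x ∂μ) l :=
        liminf_le_liminf <| Eventually.of_forall fun i =>
          lintegral_mono fun _ => min_le_left _ _

theorem tendsto_measure_prod_sdiff_prod [SFinite ν] {s : Set α} {t : Set β}
    {u : ι → Set α} {v : ι → Set β} (hs : μ s ≠ ∞) (ht : ν t ≠ ∞)
    (hu : Tendsto (fun i => μ (s \ u i)) l (𝓝 0)) (hv : Tendsto (fun i => ν (t \ v i)) l (𝓝 0)) :
    Tendsto (fun i => μ.prod ν (s ×ˢ t \ u i ×ˢ v i)) l (𝓝 0) := by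
  have hbound : Tendsto (fun i => μ s * ν (t \ v i) + μ (s \ u i) * ν t) l (𝓝 0) := by
    simpa using (ENNReal.Tendsto.const_mul hv (Or.inr hs)).add
      (ENNReal.Tendsto.mul_const hu (Or.inr ht))
  refine tendsto_of_tendsto_of_tendsto_of_le_of_le tendsto_const_nhds hbound
    (fun _ => zero_le) fun i => ?_
  dsimp only
  rw [prod_sdiff_prod, ← Measure.prod_prod, ← Measure.prod_prod]
  exact measure_union_le _ _

theorem setLIntegral_iUnion_prod_iUnion_le_liminf [SFinite ν] {f : α × β → ℝ≥0∞}
    (hf : Measurable f) {s : ℕ → Set α} {t : ℕ → Set β} {u : ι → Set α} {v : ι → Set β}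
    (hs_mono : Monotone s) (ht_mono : Monotone t) (hs : ∀ N, μ (s N) ≠ ∞) (ht : ∀ N, ν (t N) ≠ ∞)
    (hu : ∀ N, Tendsto (fun i => μ (s N \ u i)) l (𝓝 0))
    (hv : ∀ N, Tendsto (fun i => ν (t N \ v i)) l (𝓝 0)) :
    ∫⁻ z in (⋃ N, s N) ×ˢ (⋃ N, t N), f z ∂μ.prod ν ≤
      liminf (fun i => ∫⁻ z in u i ×ˢ v i, f z ∂μ.prod ν) l := by
  rw [← iUnion_prod_of_monotone hs_mono ht_mono,
    setLIntegral_iUnion_of_directed f (hs_mono.set_prod ht_mono).directed_le]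
  exact iSup_le fun N => setLIntegral_le_liminf_of_tendsto_measure_sdiff hf
    (tendsto_measure_prod_sdiff_prod (hs N) (ht N) (hu N) (hv N))

end LowerSemicontinuity

theorem Ls_eq_setLIntegral_prod (n : ℕ) (s : ℝ) (A B : Set (EuclideanSpace ℝ (Fin n))) :
    Ls n s A B = ∫⁻ z in A ×ˢ B, ENNReal.ofReal (dist z.1 z.2 ^ (-((n : ℝ) + s)))
      ∂(volume : Measure (EuclideanSpace ℝ (Fin n))).prod volume := by
  rw [setLIntegral_prod _ (by fun_prop), Ls]

namespace LocConv

variable {n : ℕ} {Ak Bk : ℕ → Set (EuclideanSpace ℝ (Fin n))}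
  {A B : Set (EuclideanSpace ℝ (Fin n))}

theorem tendsto_volume_inter_sdiff (hA : LocConv n Ak A) {K : Set (EuclideanSpace ℝ (Fin n))}
    (hK : IsBounded K) : Tendsto (fun k => volume ((A ∩ K) \ Ak k)) atTop (𝓝 0) := by
  refine tendsto_of_tendsto_of_tendsto_of_le_of_le tendsto_const_nhds (hA K hK)
    (fun _ => zero_le) fun k => measure_mono ?_
  rintro x ⟨⟨hxA, hxK⟩, hxAk⟩
  exact ⟨Or.inr ⟨hxA, hxAk⟩, hxK⟩

theorem inter (hA : LocConv n Ak A) (hB : LocConv n Bk B) :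
    LocConv n (fun k => Ak k ∩ Bk k) (A ∩ B) := by
  intro K hK
  have hsum : Tendsto (fun k => volume ((Ak k ∆ A) ∩ K) + volume ((Bk k ∆ B) ∩ K)) atTop (𝓝 0) := by
    simpa using (hA K hK).add (hB K hK)
  refine tendsto_of_tendsto_of_tendsto_of_le_of_le tendsto_const_nhds hsum
    (fun _ => zero_le) fun k => (measure_mono ?_).trans (measure_union_le _ _)
  intro x
  simp only [mem_union, mem_inter_iff, mem_symmDiff]
  tauto

theorem compl (hA : LocConv n Ak A) : LocConv n (fun k => (Ak k)ᶜ) Aᶜ := by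
  simpa only [LocConv, compl_symmDiff_compl] using hA

theorem sdiff (hA : LocConv n Ak A) (hB : LocConv n Bk B) :
    LocConv n (fun k => Ak k \ Bk k) (A \ B) :=
  hA.inter hB.compl

theorem Ls_le_liminf (s : ℝ) (hA : LocConv n Ak A) (hB : LocConv n Bk B) :
    Ls n s A B ≤ liminf (fun k => Ls n s (Ak k) (Bk k)) atTop := by
  have monotone_inter_closedBall (C : Set (EuclideanSpace ℝ (Fin n))) :
      Monotone fun N : ℕ => C ∩ closedBall 0 (N : ℝ) := fun M N hMN => by
    dsimp only
    gcongr
  have volume_inter_closedBall_ne_top (C : Set (EuclideanSpace ℝ (Fin n))) (N : ℕ) :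
      volume (C ∩ closedBall 0 (N : ℝ)) ≠ ∞ :=
    measure_inter_ne_top_of_right_ne_top measure_closedBall_lt_top.ne
  simp only [Ls_eq_setLIntegral_prod]
  rw [← iUnion_inter_closedBall_nat A 0, ← iUnion_inter_closedBall_nat B 0]
  exact setLIntegral_iUnion_prod_iUnion_le_liminf (by fun_prop)
    (monotone_inter_closedBall A) (monotone_inter_closedBall B)
    (volume_inter_closedBall_ne_top A) (volume_inter_closedBall_ne_top B)
    (fun _ => hA.tendsto_volume_inter_sdiff isBounded_closedBall)
    (fun _ => hB.tendsto_volume_inter_sdiff isBounded_closedBall)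

theorem Ps_le_liminf (s : ℝ) {Ek Ωk : ℕ → Set (EuclideanSpace ℝ (Fin n))}
    {E Ω : Set (EuclideanSpace ℝ (Fin n))} (hE : LocConv n Ek E) (hΩ : LocConv n Ωk Ω) :
    Ps n s E Ω ≤ liminf (fun k => Ps n s (Ek k) (Ωk k)) atTop := by
  have hin_in := Ls_le_liminf s (hE.inter hΩ) (hE.compl.inter hΩ)
  have hin_out := Ls_le_liminf s (hE.inter hΩ) (hE.compl.sdiff hΩ)
  have hout_in := Ls_le_liminf s (hE.sdiff hΩ) (hE.compl.inter hΩ)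
  calc Ps n s E Ω
      ≤ liminf (fun k => Ls n s (Ek k ∩ Ωk k) ((Ek k)ᶜ ∩ Ωk k)) atTop
        + liminf (fun k => Ls n s (Ek k ∩ Ωk k) ((Ek k)ᶜ \ Ωk k)) atTop
        + liminf (fun k => Ls n s (Ek k \ Ωk k) ((Ek k)ᶜ ∩ Ωk k)) atTop :=
        add_le_add (add_le_add hin_in hin_out) hout_in
    _ ≤ liminf (fun k => Ls n s (Ek k ∩ Ωk k) ((Ek k)ᶜ ∩ Ωk k)
          + Ls n s (Ek k ∩ Ωk k) ((Ek k)ᶜ \ Ωk k)) atTop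
        + liminf (fun k => Ls n s (Ek k \ Ωk k) ((Ek k)ᶜ ∩ Ωk k)) atTop := by
        gcongr
        exact liminf_add_liminf_le_liminf_add _ _
    _ ≤ liminf (fun k => Ps n s (Ek k) (Ωk k)) atTop := liminf_add_liminf_le_liminf_add _ _

end LocConv

theorem Ls_lower_semicontinuous_general (n : ℕ) (s : ℝ) :
    (∀ (Ak Bk : ℕ → Set (EuclideanSpace ℝ (Fin n))) (A B : Set (EuclideanSpace ℝ (Fin n))),
      LocConv n Ak A → LocConv n Bk B →
      Ls n s A B ≤ liminf (fun k => Ls n s (Ak k) (Bk k)) atTop)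
    ∧
    (∀ (Ek Ωk : ℕ → Set (EuclideanSpace ℝ (Fin n))) (E Ω : Set (EuclideanSpace ℝ (Fin n))),
      LocConv n Ek E → LocConv n Ωk Ω →
      Ps n s E Ω ≤ liminf (fun k => Ps n s (Ek k) (Ωk k)) atTop) :=
  ⟨fun _ _ _ _ hA hB => hA.Ls_le_liminf s hB, fun _ _ _ _ hE hΩ => hE.Ps_le_liminf s hΩ⟩

/-- Proposition 2.7: lower semicontinuity of the interaction functional `Lₛ`
and of the fractional perimeter with respect to local convergence in measure. -/
theorem Ls_lower_semicontinuous
    (n : ℕ) (hn : 1 ≤ n) (s : ℝ) (hs : s ∈ Set.Ioo (0 : ℝ) 1) :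
    (∀ (Ak Bk : ℕ → Set (EuclideanSpace ℝ (Fin n)))
      (A B : Set (EuclideanSpace ℝ (Fin n))),
      (∀ k, MeasurableSet (Ak k)) → (∀ k, MeasurableSet (Bk k)) →
      MeasurableSet A → MeasurableSet B →
      (∀ k, Disjoint (Ak k) (Bk k)) → Disjoint A B →
      LocConv n Ak A → LocConv n Bk B →
      Ls n s A B ≤ Filter.liminf (fun k => Ls n s (Ak k) (Bk k)) atTop)
    ∧
    (∀ (Ek Ωk : ℕ → Set (EuclideanSpace ℝ (Fin n)))
      (E Ω : Set (EuclideanSpace ℝ (Fin n))),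
      (∀ k, MeasurableSet (Ek k)) → MeasurableSet E →
      (∀ k, IsOpen (Ωk k)) → IsOpen Ω →
      LocConv n Ek E → LocConv n Ωk Ω →
      Ps n s E Ω ≤ Filter.liminf (fun k => Ps n s (Ek k) (Ωk k)) atTop) :=
  ⟨fun Ak Bk A B _ _ _ _ _ _ => (Ls_lower_semicontinuous_general n s).1 Ak Bk A B,
    fun Ek Ωk E Ω _ _ _ _ => (Ls_lower_semicontinuous_general n s).2 Ek Ωk E Ω⟩
end
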